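/- Let n ≥ 4 be even and let u be a normal solution with Q e^{nu} ∈ L¹(ℝⁿ). If 0 ≤ R_g ≤ C near infinity for some C > 0 and e^{nu} ∈ L¹(ℝⁿ), then ∫_{ℝⁿ} Q e^{nu} dx = (n−1)!|𝕊ⁿ|. -/

import Mathlib

open MeasureTheory Filter

noncomputable section

/-- Euclidean space ℝⁿ. -/
abbrev E (n : ℕ) := EuclideanSpace ℝ (Fin n)

/-- Volume of the standard unit n-sphere `|𝕊ⁿ|`. -/
noncomputable def sphereVol (n : ℕ) : ℝ :=
  (μH[(n : ℝ)] (Metric.sphere (0 : E (n + 1)) 1)).toReal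

/-- The Euclidean Laplacian of `u` at `x`. -/
noncomputable def lap {n : ℕ} (u : E n → ℝ) (x : E n) : ℝ :=
  ∑ i : Fin n, fderiv ℝ (fun y => fderiv ℝ u y (EuclideanSpace.single i 1)) x
    (EuclideanSpace.single i 1)

/-- `u` is a normal solution with Q-curvature `Q`. -/
def IsNormal (n : ℕ) (u Q : E n → ℝ) : Prop :=
  ∃ C : ℝ, ∀ x, u x =
    (2 / (Nat.factorial (n - 1) * sphereVol n)) *
      ∫ y, Real.log (‖y‖ / ‖x - y‖) * (Q y * Real.exp (n * u y)) + C

/-- The constant `α₀`. -/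
noncomputable def alpha0 (n : ℕ) (u Q : E n → ℝ) : ℝ :=
  (2 / (Nat.factorial (n - 1) * sphereVol n)) * ∫ y, Q y * Real.exp (n * u y)

/-- Scalar curvature of the conformal metric `e^{2u}|dx|²`. -/
noncomputable def Rg (n : ℕ) (u : E n → ℝ) (x : E n) : ℝ :=
  2 * (n - 1) * Real.exp (-2 * u x) *
    (-(lap u x) - (n - 2) / 2 * ‖gradient u x‖ ^ 2)

/-! Up to a constant, `u` is `-c` times the logarithmic potential of the integrable density
`f = Q e^{nu}`, with `c = 2 / ((n-1)! |𝕊ⁿ|)`, so its rescaled gradients `x ↦ r ∇u(r x)` converge, in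
`L²` away from the origin, to `-a x / ‖x‖²` with `a = c ∫ f`. The claim is `a = 2`.

* If `a < 1`, averages of `u(r x) + log r` against a bump away from the origin tend to infinity.
  By `1 + t ≤ e^t`, so do those of `rⁿ e^{nu(r x)}`, contradicting finite volume. Hence `a ≥ 1`.
* Tested against a bump `‖x‖² ζ(x)` away from the origin, the curvature `r² e^{2u(r x)} R_g(r x)`
  has the limit `(n-1)(n-2) a (2-a) ∫ ζ`: only `r ∇u(r x)` enters, after an integration by parts of
  the Laplacian. As `0 ≤ R_g ≤ C`, this quantity is also controlled by the averages of
  `r² e^{2u(r x)}`, which tend to zero by finite volume. Hence `a (2-a) = 0`.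
-/

open Module Topology

/-! ### Integral kernels -/

section Kernel

variable {X Y F : Type*} [TopologicalSpace X] [MeasurableSpace X] [MeasurableSpace Y]
  [NormedAddCommGroup F] {μ : Measure X} {ν : Measure Y} {H : X → Y → F}

/-- A kernel `H : X → Y → F` is locally integrable if it is integrable on `K × Y` for every compact
`K ⊆ X`. This is what Fubini needs in order to integrate `x ↦ ∫ H x y dν(y)` against compactly
supported functions. -/
def LocallyIntegrableKernel (H : X → Y → F) (μ : Measure X) (ν : Measure Y) : Prop :=
  ∀ K : Set X, IsCompact K → Integrable (Function.uncurry H) ((μ.restrict K).prod ν)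

namespace LocallyIntegrableKernel

lemma ae_integrable [SigmaCompactSpace X] [SFinite μ] [SFinite ν]
    (hH : LocallyIntegrableKernel H μ ν) : ∀ᵐ x ∂μ, Integrable (H x) ν := by
  rw [← Measure.restrict_univ (μ := μ), ← iUnion_compactCovering X, ae_restrict_iUnion_iff]
  exact fun k => (hH _ (isCompact_compactCovering X k)).prod_right_ae

variable [NormedSpace ℝ F]

lemma locallyIntegrable_integral [LocallyCompactSpace X] [SFinite ν]
    (hH : LocallyIntegrableKernel H μ ν) : LocallyIntegrable (fun x => ∫ y, H x y ∂ν) μ :=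
  locallyIntegrable_iff.2 fun K hK => (hH K hK).integral_prod_left

lemma integral_smul_integral_swap [OpensMeasurableSpace X] [SFinite μ] [SFinite ν]
    (hH : LocallyIntegrableKernel H μ ν) {g : X → ℝ} (hg : Continuous g)
    (hgc : HasCompactSupport g) :
    ∫ x, g x • ∫ y, H x y ∂ν ∂μ = ∫ y, ∫ x, g x • H x y ∂μ ∂ν := by
  have hg0 : ∀ x ∉ tsupport g, g x = 0 := fun x => image_eq_zero_of_notMem_tsupport
  obtain ⟨M, hM⟩ := hg.bounded_above_of_compact_support hgc
  have hint : Integrable (Function.uncurry fun x y => g x • H x y)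
      ((μ.restrict (tsupport g)).prod ν) :=
    (hH _ hgc).bdd_smul (φ := fun p : X × Y => g p.1) M
      hg.measurable.aestronglyMeasurable.comp_fst (.of_forall fun p => hM p.1)
  calc ∫ x, g x • ∫ y, H x y ∂ν ∂μ = ∫ x in tsupport g, ∫ y, g x • H x y ∂ν ∂μ := by
        simp only [integral_smul]
        exact (setIntegral_eq_integral_of_forall_compl_eq_zero
          fun x hx => by rw [hg0 x hx, zero_smul]).symm
    _ = ∫ y, ∫ x in tsupport g, g x • H x y ∂μ ∂ν := integral_integral_swap hint
    _ = ∫ y, ∫ x, g x • H x y ∂μ ∂ν := by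
        congr with y
        exact setIntegral_eq_integral_of_forall_compl_eq_zero
          fun x hx => by rw [hg0 x hx, zero_smul]

end LocallyIntegrableKernel

end Kernel

section WeakConvergence

variable {X F ι : Type*} [TopologicalSpace X] [T2Space X] [MeasurableSpace X]
  [OpensMeasurableSpace X] [NormedAddCommGroup F] [NormedSpace ℝ F] {μ : Measure X}

lemma tendsto_integral_smul_of_locallyIntegrable_bound {l : Filter ι} [l.IsCountablyGenerated]
    {g : X → ℝ} (hg : Continuous g) (hgc : HasCompactSupport g) {h : ι → X → F} {h₀ : X → F}
    {b : X → ℝ} (hb : LocallyIntegrable b μ) (hm : ∀ i, AEStronglyMeasurable (h i) μ)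
    (hle : ∀ᶠ i in l, ∀ᵐ x ∂μ, ‖h i x‖ ≤ b x)
    (hlim : ∀ᵐ x ∂μ, Tendsto (fun i => h i x) l (𝓝 (h₀ x))) :
    Tendsto (fun i => ∫ x, g x • h i x ∂μ) l (𝓝 (∫ x, g x • h₀ x ∂μ)) := by
  refine tendsto_integral_filter_of_dominated_convergence (fun x => ‖g x‖ * b x)
    (.of_forall fun i => hg.measurable.aestronglyMeasurable.smul (hm i)) ?_
    (hb.integrable_smul_left_of_hasCompactSupport hg.norm hgc.norm) ?_
  · filter_upwards [hle] with i hi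
    filter_upwards [hi] with x hx
    rw [norm_smul]
    gcongr
  · filter_upwards [hlim] with x hx using hx.const_smul _

end WeakConvergence

/-! ### The gradient of `log ‖x‖` -/

section LogGrad

variable {V : Type*} [NormedAddCommGroup V] [InnerProductSpace ℝ V]

/-- The field `z / ‖z‖²`, the gradient of `log ‖z‖` away from the origin. -/
def logGrad (z : V) : V := (‖z‖ ^ 2)⁻¹ • z

lemma norm_logGrad (z : V) : ‖logGrad z‖ = ‖z‖⁻¹ := by
  rcases eq_or_ne z 0 with rfl | hz
  · simp [logGrad]
  · rw [logGrad, norm_smul, norm_inv, norm_pow, norm_norm]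
    field_simp

lemma smul_logGrad_smul {r : ℝ} (hr : r ≠ 0) (z : V) : r • logGrad (r • z) = logGrad z := by
  have hz : r * (‖r • z‖ ^ 2)⁻¹ * r = (‖z‖ ^ 2)⁻¹ := by
    rw [norm_smul, mul_pow, Real.norm_eq_abs, sq_abs]
    field_simp
  rw [logGrad, smul_smul, smul_smul, hz, logGrad]

lemma continuousAt_logGrad {z : V} (hz : z ≠ 0) : ContinuousAt logGrad z := by
  have : ‖z‖ ^ 2 ≠ 0 := by simpa using hz
  unfold logGrad
  fun_prop (disch := assumption)

variable [MeasurableSpace V] [BorelSpace V]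

@[fun_prop]
lemma measurable_logGrad [SecondCountableTopology V] : Measurable (logGrad : V → V) := by
  unfold logGrad
  fun_prop

end LogGrad

lemma abs_log_le_add_inv {t : ℝ} (ht : 0 ≤ t) : |Real.log t| ≤ t + t⁻¹ := by
  rcases ht.eq_or_lt with rfl | h
  · simp
  have h1 := Real.log_le_self ht
  have h2 := Real.log_le_self (inv_nonneg.2 ht)
  rw [Real.log_inv] at h2
  have := inv_pos.2 h
  exact abs_le.2 ⟨by linarith, by linarith⟩

lemma integrable_mul_comp_sub {V : Type*} [NormedAddCommGroup V] [MeasurableSpace V] [BorelSpace V]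
    {μ : Measure V} [μ.IsAddRightInvariant] {g : V → ℝ} (hg : Continuous g)
    (hgc : HasCompactSupport g) {h : V → ℝ} (hh : LocallyIntegrable h μ) (y : V) :
    Integrable (fun x => g x * h (x - y)) μ := by
  have := hh.integrable_smul_left_of_hasCompactSupport (g := fun x => g (x + y)) (by fun_prop)
    (hgc.comp_homeomorph (Homeomorph.addRight y))
  simpa using this.comp_sub_right y

section NormedSpace

variable {V : Type*} [NormedAddCommGroup V] [NormedSpace ℝ V] [FiniteDimensional ℝ V]
  [MeasurableSpace V] [BorelSpace V] {μ : Measure V} [μ.IsAddHaarMeasure]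

lemma ae_ne_of_finrank_pos (h : 1 ≤ finrank ℝ V) (y : V) : ∀ᵐ x ∂μ, x ≠ y :=
  have := finrank_pos_iff.1 h
  compl_mem_ae_iff.2 (measure_singleton y)

lemma locallyIntegrable_inv_norm_pow {k : ℕ} (hk : k < finrank ℝ V) :
    LocallyIntegrable (fun z : V => (‖z‖ ^ k)⁻¹) μ :=
  locallyIntegrable_of_norm_le_rpow (C := 1) (α := k) (by omega) (by exact_mod_cast hk)
    (.of_forall fun z => by simp [Real.rpow_neg]) (by fun_prop)

lemma locallyIntegrable_inv_norm (h2 : 2 ≤ finrank ℝ V) :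
    LocallyIntegrable (fun z : V => ‖z‖⁻¹) μ := by
  simpa using locallyIntegrable_inv_norm_pow (μ := μ) (k := 1) h2

lemma locallyIntegrable_log_norm (h2 : 2 ≤ finrank ℝ V) :
    LocallyIntegrable (fun z : V => Real.log ‖z‖) μ := by
  have hb : LocallyIntegrable (fun z : V => ‖z‖ + ‖z‖⁻¹) μ :=
    continuous_norm.locallyIntegrable.add (locallyIntegrable_inv_norm h2)
  refine hb.mono (Measurable.aestronglyMeasurable (by fun_prop)) (.of_forall fun z => ?_)
  rw [Real.norm_of_nonneg (r := ‖z‖ + ‖z‖⁻¹) (by positivity)]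
  exact abs_log_le_add_inv (norm_nonneg z)

lemma integral_mul_fderiv_of_hasCompactSupport {g h : V → ℝ} (hg : ContDiff ℝ 1 g)
    (hgc : HasCompactSupport g) (hh : ContDiff ℝ 1 h) (v : V) :
    ∫ x, g x * fderiv ℝ h x v ∂μ = -∫ x, fderiv ℝ g x v * h x ∂μ := by
  have hg' : Continuous fun x => fderiv ℝ g x v :=
    (hg.continuous_fderiv one_ne_zero).clm_apply continuous_const
  have hh' : Continuous fun x => fderiv ℝ h x v :=
    (hh.continuous_fderiv one_ne_zero).clm_apply continuous_const
  apply integral_mul_fderiv_eq_neg_fderiv_mul_of_integrable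
  · exact (hg'.mul hh.continuous).integrable_of_hasCompactSupport (hgc.fderiv_apply ℝ v).mul_right
  · exact (hg.continuous.mul hh').integrable_of_hasCompactSupport hgc.mul_right
  · exact (hg.continuous.mul hh.continuous).integrable_of_hasCompactSupport hgc.mul_right
  · exact fun x _ => hg.differentiable one_ne_zero x
  · exact fun x _ => hh.differentiable one_ne_zero x

lemma integral_fderiv_eq_zero_of_hasCompactSupport {g : V → ℝ} (hg : ContDiff ℝ 1 g)
    (hgc : HasCompactSupport g) (v : V) : ∫ x, fderiv ℝ g x v ∂μ = 0 := by
  simpa using integral_mul_fderiv_of_hasCompactSupport (μ := μ) hg hgc (h := fun _ => 1)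
    contDiff_const v

end NormedSpace

/-! ### Weak derivatives of logarithmic potentials -/

section RegularizedLogNorm

variable {V : Type*} [NormedAddCommGroup V]

/-- The smooth approximation `log √(‖z‖² + ε)` of `log ‖z‖`. -/
def regLogNorm (ε : ℝ) (z : V) : ℝ := 1 / 2 * Real.log (‖z‖ ^ 2 + ε)

lemma abs_regLogNorm_le {z : V} (hz : z ≠ 0) {ε : ℝ} (h0 : 0 ≤ ε) (h1 : ε ≤ 1) :
    |regLogNorm ε z| ≤ ‖z‖ ^ 2 + 1 + ‖z‖⁻¹ := by
  have hz0 : 0 < ‖z‖ := norm_pos_iff.2 hz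
  have lower : Real.log ‖z‖ ≤ regLogNorm ε z := by
    have := Real.log_le_log (by positivity) (show ‖z‖ ^ 2 ≤ ‖z‖ ^ 2 + ε by linarith)
    rw [Real.log_pow, Nat.cast_ofNat] at this
    rw [regLogNorm]
    linarith
  have upper := Real.log_le_self (show 0 ≤ ‖z‖ ^ 2 + ε by positivity)
  have hlog := Real.log_le_self (inv_pos.2 hz0).le
  rw [Real.log_inv] at hlog
  refine abs_le.2 ⟨by linarith [sq_nonneg ‖z‖], ?_⟩
  have := inv_pos.2 hz0
  rw [regLogNorm]
  nlinarith

lemma tendsto_regLogNorm {z : V} (hz : z ≠ 0) :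
    Tendsto (fun ε => regLogNorm ε z) (𝓝[>] 0) (𝓝 (Real.log ‖z‖)) := by
  have hz2 : ‖z‖ ^ 2 + 0 ≠ 0 := by simpa using hz
  have h : ContinuousAt (fun ε => regLogNorm ε z) 0 := by
    unfold regLogNorm
    fun_prop (disch := assumption)
  have h0 : regLogNorm 0 z = Real.log ‖z‖ := by simp [regLogNorm, Real.log_pow]
  exact h0 ▸ h.tendsto.mono_left nhdsWithin_le_nhds

variable [InnerProductSpace ℝ V]

lemma contDiff_regLogNorm {ε : ℝ} (hε : 0 < ε) : ContDiff ℝ 1 (regLogNorm ε : V → ℝ) :=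
  contDiff_const.mul (((contDiff_norm_sq ℝ).add contDiff_const).log fun z => by positivity)

lemma fderiv_regLogNorm {ε : ℝ} (hε : 0 < ε) (z v : V) :
    fderiv ℝ (regLogNorm ε) z v = (‖z‖ ^ 2 + ε)⁻¹ * inner ℝ z v := by
  have hz : ‖z‖ ^ 2 + ε ≠ 0 := by positivity
  have : HasFDerivAt (regLogNorm ε) _ z :=
    (((hasFDerivAt_id z).norm_sq.add_const ε).log hz).const_mul (1 / 2 : ℝ)
  rw [this.fderiv]
  simp
  ring

lemma norm_fderiv_regLogNorm_le {ε : ℝ} (hε : 0 < ε) (z v : V) :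
    ‖fderiv ℝ (regLogNorm ε) z v‖ ≤ ‖z‖⁻¹ * ‖v‖ := by
  rcases eq_or_ne z 0 with rfl | hz
  · simp [fderiv_regLogNorm hε]
  have : 0 < ‖z‖ := norm_pos_iff.2 hz
  rw [fderiv_regLogNorm hε, norm_mul, Real.norm_of_nonneg (by positivity)]
  calc (‖z‖ ^ 2 + ε)⁻¹ * ‖inner ℝ z v‖ ≤ (‖z‖ ^ 2)⁻¹ * (‖z‖ * ‖v‖) := by
        gcongr
        · linarith
        · exact norm_inner_le_norm z v
    _ = ‖z‖⁻¹ * ‖v‖ := by field_simp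

lemma tendsto_fderiv_regLogNorm {z : V} (hz : z ≠ 0) (v : V) :
    Tendsto (fun ε => fderiv ℝ (regLogNorm ε) z v) (𝓝[>] 0) (𝓝 (inner ℝ (logGrad z) v)) := by
  have hz2 : ‖z‖ ^ 2 + 0 ≠ 0 := by simpa using hz
  have h : ContinuousAt (fun ε => (‖z‖ ^ 2 + ε)⁻¹ * inner ℝ z v) 0 := by
    fun_prop (disch := assumption)
  have h0 : (‖z‖ ^ 2 + 0)⁻¹ * inner ℝ z v = inner ℝ (logGrad z) v := by
    rw [add_zero, logGrad, real_inner_smul_left]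
  refine (h0 ▸ h.tendsto.mono_left nhdsWithin_le_nhds).congr' ?_
  filter_upwards [self_mem_nhdsWithin] with ε hε
  rw [fderiv_regLogNorm hε]

end RegularizedLogNorm

section WeakDerivative

variable {V : Type*} [NormedAddCommGroup V] [InnerProductSpace ℝ V] [FiniteDimensional ℝ V]
  [MeasurableSpace V] [BorelSpace V] {μ : Measure V} [μ.IsAddHaarMeasure]

lemma integral_fderiv_mul_log_norm (h2 : 2 ≤ finrank ℝ V) {g : V → ℝ} (hg : ContDiff ℝ 1 g)
    (hgc : HasCompactSupport g) (v : V) :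
    ∫ x, fderiv ℝ g x v * Real.log ‖x‖ ∂μ = -∫ x, g x * inner ℝ (logGrad x) v ∂μ := by
  have hg' : Continuous fun x => fderiv ℝ g x v :=
    (hg.continuous_fderiv one_ne_zero).clm_apply continuous_const
  have hne := ae_ne_of_finrank_pos (μ := μ) (one_le_two.trans h2) 0
  have hinv := locallyIntegrable_inv_norm (μ := μ) h2
  have hpos : ∀ᶠ ε : ℝ in 𝓝[>] 0, 0 < ε := self_mem_nhdsWithin
  have hle1 : ∀ᶠ ε : ℝ in 𝓝[>] 0, ε ≤ 1 :=
    nhdsWithin_le_nhds (Iic_mem_nhds zero_lt_one)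
  have hval : Tendsto (fun ε => ∫ x, fderiv ℝ g x v * regLogNorm ε x ∂μ) (𝓝[>] 0)
      (𝓝 (∫ x, fderiv ℝ g x v * Real.log ‖x‖ ∂μ)) := by
    refine tendsto_integral_smul_of_locallyIntegrable_bound hg' (hgc.fderiv_apply ℝ v)
      (b := fun x => ‖x‖ ^ 2 + 1 + ‖x‖⁻¹)
      ((Continuous.locallyIntegrable (by fun_prop)).add hinv)
      (fun ε => Measurable.aestronglyMeasurable (by unfold regLogNorm; fun_prop)) ?_ ?_
    · filter_upwards [hpos, hle1] with ε h0 h1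
      filter_upwards [hne] with x hx using abs_regLogNorm_le hx h0.le h1
    · filter_upwards [hne] with x hx using tendsto_regLogNorm hx
  have hder : Tendsto (fun ε => ∫ x, g x * fderiv ℝ (regLogNorm ε) x v ∂μ) (𝓝[>] 0)
      (𝓝 (∫ x, g x * inner ℝ (logGrad x) v ∂μ)) := by
    refine tendsto_integral_smul_of_locallyIntegrable_bound hg.continuous hgc
      (b := fun x => ‖v‖ * ‖x‖⁻¹) (hinv.smul ‖v‖)
      (fun ε => (measurable_fderiv_apply_const ℝ _ v).aestronglyMeasurable) ?_ ?_
    · filter_upwards [hpos] with ε h0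
      exact .of_forall fun x => (norm_fderiv_regLogNorm_le h0 x v).trans_eq (mul_comm _ _)
    · filter_upwards [hne] with x hx using tendsto_fderiv_regLogNorm hx v
  have hparts : ∀ᶠ ε in 𝓝[>] 0, ∫ x, g x * fderiv ℝ (regLogNorm ε) x v ∂μ =
      -∫ x, fderiv ℝ g x v * regLogNorm ε x ∂μ := by
    filter_upwards [hpos] with ε h0
    exact integral_mul_fderiv_of_hasCompactSupport hg hgc (contDiff_regLogNorm h0) v
  rw [tendsto_nhds_unique (hder.congr' hparts) hval.neg, neg_neg]

lemma integral_fderiv_mul_log_norm_sub_div (h2 : 2 ≤ finrank ℝ V) {g : V → ℝ}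
    (hg : ContDiff ℝ 1 g) (hgc : HasCompactSupport g) {c : ℝ} (hc : c ≠ 0) (y v : V) :
    ∫ x, fderiv ℝ g x v * Real.log (‖x - y‖ / c) ∂μ =
      -∫ x, g x * inner ℝ (logGrad (x - y)) v ∂μ := by
  have hg' : Continuous fun x => fderiv ℝ g x v :=
    (hg.continuous_fderiv one_ne_zero).clm_apply continuous_const
  have hg'c := hgc.fderiv_apply ℝ v
  have hsplit : ∀ᵐ x ∂μ, fderiv ℝ g x v * Real.log (‖x - y‖ / c) =
      fderiv ℝ g x v * Real.log ‖x - y‖ - fderiv ℝ g x v * Real.log c := by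
    filter_upwards [ae_ne_of_finrank_pos (one_le_two.trans h2) y] with x hx
    rw [Real.log_div (norm_ne_zero_iff.2 (sub_ne_zero.2 hx)) hc, mul_sub]
  have htrans : ∫ x, fderiv ℝ g x v * Real.log ‖x - y‖ ∂μ =
      -∫ x, g x * inner ℝ (logGrad (x - y)) v ∂μ := by
    have := integral_fderiv_mul_log_norm (μ := μ) h2 (g := fun x => g (x + y))
      (hg.comp (contDiff_id.add contDiff_const)) (hgc.comp_homeomorph (Homeomorph.addRight y)) v
    simp only [fderiv_comp_add_right] at this
    rw [← integral_sub_right_eq_self _ y] at this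
    rw [← integral_sub_right_eq_self (fun x => g (x + y) * inner ℝ (logGrad x) v) y] at this
    simpa only [sub_add_cancel] using this
  rw [integral_congr_ae hsplit, integral_sub
      (integrable_mul_comp_sub hg' hg'c (locallyIntegrable_log_norm h2) y)
      ((hg'.integrable_of_hasCompactSupport hg'c).mul_const _), integral_mul_const,
    integral_fderiv_eq_zero_of_hasCompactSupport hg hgc, zero_mul, sub_zero, htrans]

end WeakDerivative

section Potential

variable {V : Type*} [NormedAddCommGroup V]

lemma inv_norm_pow_le_one_add_indicator_ball (k : ℕ) (z : V) :
    (‖z‖ ^ k)⁻¹ ≤ 1 + (Metric.ball 0 1).indicator (fun z : V => (‖z‖ ^ k)⁻¹) z := by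
  by_cases hz : z ∈ Metric.ball (0 : V) 1
  · simp [Set.indicator_of_mem hz]
  · have : 1 ≤ ‖z‖ := by simpa using hz
    simpa [Set.indicator_of_notMem hz] using inv_le_one_of_one_le₀ (one_le_pow₀ this)

lemma abs_log_norm_sub_div_le {R : ℝ} {x : V} (hx : ‖x‖ ≤ R) (y : V) :
    |Real.log (‖x - y‖ / (1 + ‖y‖))| ≤ (R + 2) * (1 + ‖x - y‖⁻¹) := by
  have hR : 0 ≤ R := (norm_nonneg x).trans hx
  rcases eq_or_ne x y with rfl | hxy
  · simp; linarith
  have hd : 0 < ‖x - y‖ := norm_pos_iff.2 (sub_ne_zero.2 hxy)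
  have hy : ‖y‖ ≤ ‖x‖ + ‖x - y‖ := by simpa using norm_sub_le x (x - y)
  have hratio : ‖x - y‖ / (1 + ‖y‖) ≤ R + 1 := by
    rw [div_le_iff₀ (by positivity)]
    nlinarith [norm_sub_le x y, norm_nonneg y]
  have hinv : (‖x - y‖ / (1 + ‖y‖))⁻¹ ≤ 1 + (R + 1) * ‖x - y‖⁻¹ := by
    rw [inv_div, div_le_iff₀ hd, add_mul, inv_mul_cancel_right₀ hd.ne']
    linarith
  linarith [abs_log_le_add_inv (show 0 ≤ ‖x - y‖ / (1 + ‖y‖) by positivity), inv_pos.2 hd]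

variable [NormedSpace ℝ V] [FiniteDimensional ℝ V] [MeasurableSpace V] [BorelSpace V]
  {μ : Measure V} [μ.IsAddHaarMeasure]

lemma integrable_indicator_ball_inv_norm_pow {k : ℕ} (hk : k < finrank ℝ V) :
    Integrable ((Metric.ball 0 1).indicator fun z : V => (‖z‖ ^ k)⁻¹) μ :=
  (integrable_indicator_iff measurableSet_ball).2 <|
    ((locallyIntegrable_inv_norm_pow hk).integrableOn_isCompact
      (isCompact_closedBall 0 1)).mono_set Metric.ball_subset_closedBall

lemma locallyIntegrableKernel_smul_of_norm_le {F : Type*} [NormedAddCommGroup F] [NormedSpace ℝ F]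
    (h2 : 2 ≤ finrank ℝ V) {f : V → ℝ} (hf : Integrable f μ) {k : V → V → F}
    (hk : StronglyMeasurable (Function.uncurry k))
    (hle : ∀ R : ℝ, ∃ C : ℝ, ∀ x y, ‖x‖ ≤ R → ‖k x y‖ ≤ C * (1 + ‖x - y‖⁻¹)) :
    LocallyIntegrableKernel (fun x y => f y • k x y) μ μ := by
  intro K hK
  have : IsFiniteMeasure (μ.restrict K) := ⟨by simpa using hK.measure_lt_top⟩
  obtain ⟨R, hR⟩ := hK.isBounded.subset_closedBall 0
  obtain ⟨C, hC⟩ := hle R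
  set ψ : V → ℝ := (Metric.ball 0 1).indicator fun z => (‖z‖ ^ 1)⁻¹ with hψ
  have hf2 : Integrable (fun p : V × V => f p.2) ((μ.restrict K).prod μ) := hf.comp_snd _
  have hfψ : Integrable (fun p : V × V => f p.2 * ψ (p.1 - p.2)) ((μ.restrict K).prod μ) := by
    have := hf.convolution_integrand (ContinuousLinearMap.mul ℝ ℝ)
      (integrable_indicator_ball_inv_norm_pow (μ := μ) (k := 1) h2)
    exact this.mono_measure (Measure.prod_mono Measure.restrict_le_self le_rfl)
  have hmem : ∀ᵐ p : V × V ∂(μ.restrict K).prod μ, p.1 ∈ K :=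
    Measure.quasiMeasurePreserving_fst.ae (ae_restrict_mem hK.measurableSet)
  refine ((hf2.norm.const_mul (2 * |C|)).add (hfψ.norm.const_mul |C|)).mono'
    (hf.1.comp_snd.smul hk.aestronglyMeasurable) ?_
  filter_upwards [hmem] with ⟨x, y⟩ hx
  have hψ0 : 0 ≤ ψ (x - y) := Set.indicator_nonneg (fun _ _ => by positivity) _
  have hinv : ‖x - y‖⁻¹ ≤ 1 + ψ (x - y) := by
    simpa only [hψ, pow_one] using inv_norm_pow_le_one_add_indicator_ball 1 (x - y)
  calc ‖f y • k x y‖ ≤ |f y| * (|C| * (1 + ‖x - y‖⁻¹)) := by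
        rw [norm_smul, Real.norm_eq_abs]
        gcongr
        refine (hC x y (mem_closedBall_zero_iff.1 (hR hx))).trans ?_
        gcongr
        exact le_abs_self C
    _ ≤ |f y| * (|C| * (1 + (1 + ψ (x - y)))) := by gcongr
    _ = 2 * |C| * ‖f y‖ + |C| * ‖f y * ψ (x - y)‖ := by
        rw [norm_mul, Real.norm_of_nonneg hψ0, Real.norm_eq_abs]
        ring

lemma locallyIntegrableKernel_log (h2 : 2 ≤ finrank ℝ V) {f : V → ℝ} (hf : Integrable f μ) :
    LocallyIntegrableKernel (fun x y => f y • Real.log (‖x - y‖ / (1 + ‖y‖))) μ μ :=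
  locallyIntegrableKernel_smul_of_norm_le h2 hf
    (Measurable.stronglyMeasurable (by unfold Function.uncurry; fun_prop))
    fun R => ⟨R + 2, fun _ y hx => abs_log_norm_sub_div_le hx y⟩

end Potential

lemma continuous_gradient {V : Type*} [NormedAddCommGroup V] [InnerProductSpace ℝ V]
    [CompleteSpace V] {u : V → ℝ} (hu : ContDiff ℝ 1 u) : Continuous (gradient u) :=
  (InnerProductSpace.toDual ℝ V).symm.continuous.comp (hu.continuous_fderiv one_ne_zero)

section LogPotential

variable {V : Type*} [NormedAddCommGroup V] [InnerProductSpace ℝ V] [MeasurableSpace V]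

/-- The logarithmic potential `∫ f(y) log (‖x - y‖ / (1 + ‖y‖)) dy` of a density `f`. Dividing by
`1 + ‖y‖` makes it converge for almost every `x` as soon as `f` is integrable. -/
def logPotential (μ : Measure V) (f : V → ℝ) (x : V) : ℝ :=
  ∫ y, f y • Real.log (‖x - y‖ / (1 + ‖y‖)) ∂μ

/-- The field `∫ f(y) (x - y) / ‖x - y‖² dy`, the weak gradient of the logarithmic potential. -/
def logField (μ : Measure V) (f : V → ℝ) (x : V) : V := ∫ y, f y • logGrad (x - y) ∂μ

variable [FiniteDimensional ℝ V] [BorelSpace V] {μ : Measure V} [μ.IsAddHaarMeasure]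

lemma locallyIntegrableKernel_logGrad (h2 : 2 ≤ finrank ℝ V) {f : V → ℝ} (hf : Integrable f μ) :
    LocallyIntegrableKernel (fun x y => f y • logGrad (x - y)) μ μ :=
  locallyIntegrableKernel_smul_of_norm_le h2 hf
    (Measurable.stronglyMeasurable (by unfold Function.uncurry; fun_prop))
    fun _ => ⟨1, fun x y _ => by rw [norm_logGrad]; linarith⟩

lemma integral_fderiv_mul_logPotential (h2 : 2 ≤ finrank ℝ V) {f : V → ℝ} (hf : Integrable f μ)
    {g : V → ℝ} (hg : ContDiff ℝ 1 g) (hgc : HasCompactSupport g) (v : V) :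
    ∫ x, fderiv ℝ g x v * logPotential μ f x ∂μ =
      -∫ x, g x * inner ℝ (logField μ f x) v ∂μ := by
  have hg' : Continuous fun x => fderiv ℝ g x v :=
    (hg.continuous_fderiv one_ne_zero).clm_apply continuous_const
  have hgrad := locallyIntegrableKernel_logGrad h2 hf
  have hinner : LocallyIntegrableKernel (fun x y => f y * inner ℝ (logGrad (x - y)) v) μ μ :=
    fun K hK => by simpa only [Function.uncurry_def, real_inner_smul_left] using
      (hgrad K hK).inner_const (𝕜 := ℝ) v
  calc ∫ x, fderiv ℝ g x v * logPotential μ f x ∂μ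
      = ∫ y, ∫ x, fderiv ℝ g x v * (f y * Real.log (‖x - y‖ / (1 + ‖y‖))) ∂μ ∂μ :=
        (locallyIntegrableKernel_log h2 hf).integral_smul_integral_swap hg' (hgc.fderiv_apply ℝ v)
    _ = ∫ y, f y * -∫ x, g x * inner ℝ (logGrad (x - y)) v ∂μ ∂μ := by
        congr with y
        rw [← integral_fderiv_mul_log_norm_sub_div h2 hg hgc (c := 1 + ‖y‖) (by positivity),
          ← integral_const_mul]
        simp only [mul_left_comm]
    _ = -∫ y, ∫ x, g x * (f y * inner ℝ (logGrad (x - y)) v) ∂μ ∂μ := by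
        simp only [mul_neg, integral_neg, ← integral_const_mul, mul_left_comm]
    _ = -∫ x, g x * inner ℝ (logField μ f x) v ∂μ := by
        refine congrArg Neg.neg <|
          (hinner.integral_smul_integral_swap hg.continuous hgc).symm.trans (integral_congr_ae ?_)
        filter_upwards [hgrad.ae_integrable] with x hx
        rw [logField, real_inner_comm, ← integral_inner hx]
        simp only [real_inner_smul_right, real_inner_comm v, smul_eq_mul]

lemma ae_gradient_eq_smul_logField (h2 : 2 ≤ finrank ℝ V) {f u : V → ℝ} (hf : Integrable f μ)
    (hu : ContDiff ℝ 1 u) {a b : ℝ} (hrep : ∀ᵐ x ∂μ, u x = a + b * logPotential μ f x) :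
    ∀ᵐ x ∂μ, gradient u x = b • logField μ f x := by
  have hgrad := (continuous_gradient hu).locallyIntegrable (μ := μ)
  have hfield : LocallyIntegrable (fun x => b • logField μ f x) μ :=
    (locallyIntegrableKernel_logGrad h2 hf).locallyIntegrable_integral.smul b
  refine ae_eq_of_integral_contDiff_smul_eq hgrad hfield fun g hg' hgc => ?_
  have hg : ContDiff ℝ 1 g := hg'.of_le (by exact_mod_cast le_top)
  refine ext_inner_left ℝ fun v => ?_
  rw [← integral_inner (hgrad.integrable_smul_left_of_hasCompactSupport hg.continuous hgc),
    ← integral_inner (hfield.integrable_smul_left_of_hasCompactSupport hg.continuous hgc)]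
  simp only [real_inner_smul_right, inner_gradient_right, conj_trivial]
  have hdg : Continuous fun x => fderiv ℝ g x v :=
    (hg.continuous_fderiv one_ne_zero).clm_apply continuous_const
  have hdgc := hgc.fderiv_apply ℝ v
  have hpot : Integrable (fun x => fderiv ℝ g x v * logPotential μ f x) μ :=
    (locallyIntegrableKernel_log h2 hf).locallyIntegrable_integral
      |>.integrable_smul_left_of_hasCompactSupport hdg hdgc
  calc ∫ x, g x * fderiv ℝ u x v ∂μ = -∫ x, fderiv ℝ g x v * u x ∂μ :=
        integral_mul_fderiv_of_hasCompactSupport hg hgc hu v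
    _ = -∫ x, (fderiv ℝ g x v * a + b * (fderiv ℝ g x v * logPotential μ f x)) ∂μ := by
        congr 1
        refine integral_congr_ae ?_
        filter_upwards [hrep] with x hx
        rw [hx]
        ring
    _ = -(b * ∫ x, fderiv ℝ g x v * logPotential μ f x ∂μ) := by
        rw [integral_add ((hdg.integrable_of_hasCompactSupport hdgc).mul_const a)
          (hpot.const_mul b),
          integral_mul_const, integral_const_mul,
          integral_fderiv_eq_zero_of_hasCompactSupport hg hgc, zero_mul, zero_add]
    _ = ∫ x, g x * (b * inner ℝ v (logField μ f x)) ∂μ := by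
        rw [integral_fderiv_mul_logPotential h2 hf hg hgc, mul_neg, neg_neg, ← integral_const_mul]
        simp only [mul_left_comm b, real_inner_comm v]

lemma exists_ae_eq_add_logPotential (h2 : 2 ≤ finrank ℝ V) {f u : V → ℝ} (hf : Integrable f μ)
    (hu : Continuous u) {a b : ℝ}
    (hrep : ∀ x, u x = b * (∫ y, Real.log (‖y‖ / ‖x - y‖) * f y ∂μ) + a) (hne : ∃ x, u x ≠ a) :
    ∃ a', ∀ᵐ x ∂μ, u x = a' + -b * logPotential μ f x := by
  have hker := (locallyIntegrableKernel_log h2 hf).ae_integrable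
  have hne0 := ae_ne_of_finrank_pos (μ := μ) (one_le_two.trans h2)
  have hsplit (x : V) : ∀ᵐ y ∂μ, Real.log (‖y‖ / ‖x - y‖) * f y =
      Real.log (‖y‖ / (1 + ‖y‖)) * f y - f y • Real.log (‖x - y‖ / (1 + ‖y‖)) := by
    filter_upwards [hne0 0, hne0 x] with y hy hyx
    have hy0 : ‖y‖ ≠ 0 := norm_ne_zero_iff.2 hy
    have hxy : ‖x - y‖ ≠ 0 := norm_ne_zero_iff.2 (sub_ne_zero.2 hyx.symm)
    have hy1 : 1 + ‖y‖ ≠ 0 := by positivity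
    rw [Real.log_div hy0 hxy, Real.log_div hy0 hy1, Real.log_div hxy hy1, smul_eq_mul]
    ring
  have hbase : Integrable (fun y => Real.log (‖y‖ / (1 + ‖y‖)) * f y) μ := by
    obtain ⟨x, hxa, hx⟩ := (Measure.dense_of_ae hker).inter_open_nonempty _
      (isOpen_ne_fun hu continuous_const) hne
    have hlog : Integrable (fun y => Real.log (‖y‖ / ‖x - y‖) * f y) μ := by
      by_contra h
      exact hxa (by rw [hrep, integral_undef h, mul_zero, zero_add])
    refine (hlog.add hx).congr ?_
    filter_upwards [hsplit x] with y hy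
    simp only [Pi.add_apply, hy, sub_add_cancel]
  refine ⟨a + b * ∫ y, Real.log (‖y‖ / (1 + ‖y‖)) * f y ∂μ, ?_⟩
  filter_upwards [hker] with x hx
  rw [hrep, integral_congr_ae (hsplit x), integral_sub hbase hx, logPotential]
  ring

end LogPotential

/-! ### Blowing down the gradient of a logarithmic potential -/

section WeightedCauchySchwarz

variable {X Y F : Type*} [MeasurableSpace X] [MeasurableSpace Y] [NormedAddCommGroup F]
  {μ : Measure X} {ν : Measure Y}

lemma tendsto_eLpNorm_two_zero {ι : Type*} {l : Filter ι} {g : ι → X → F}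
    (h : Tendsto (fun i => ∫⁻ x, ‖g i x‖ₑ ^ 2 ∂μ) l (𝓝 0)) :
    Tendsto (fun i => eLpNorm (g i) 2 μ) l (𝓝 0) := by
  simpa [eLpNorm_eq_lintegral_rpow_enorm_toReal] using h.ennrpow_const (1 / 2)

lemma lintegral_mul_sq_le {a b : Y → ENNReal} (ha : AEMeasurable a ν) (hb : AEMeasurable b ν) :
    (∫⁻ y, a y * b y ∂ν) ^ 2 ≤ (∫⁻ y, a y ∂ν) * ∫⁻ y, a y * b y ^ 2 ∂ν := by
  have sq_rpow (t : ENNReal) : (t ^ (1 / 2 : ℝ)) ^ 2 = t := by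
    rw [← ENNReal.rpow_natCast, ← ENNReal.rpow_mul]; norm_num
  have rpow_sq (t : ENNReal) : (t ^ 2) ^ (1 / 2 : ℝ) = t := by
    rw [← ENNReal.rpow_natCast, ← ENNReal.rpow_mul]; norm_num
  have hsplit (y : Y) : a y ^ (1 / 2 : ℝ) * (a y * b y ^ 2) ^ (1 / 2 : ℝ) = a y * b y := by
    rw [ENNReal.mul_rpow_of_nonneg _ _ (by norm_num), rpow_sq, ← mul_assoc, ← sq, sq_rpow]
  have h := ENNReal.lintegral_mul_norm_pow_le (μ := ν) (p := 1 / 2) (q := 1 / 2) ha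
    (ha.mul (hb.pow_const 2)) (by norm_num) (by norm_num) (by norm_num)
  simp only [Pi.mul_apply, hsplit] at h
  simpa only [mul_pow, sq_rpow] using pow_le_pow_left₀ zero_le h 2

lemma lintegral_enorm_integral_smul_sq_le [NormedSpace ℝ F] [SFinite μ] [SFinite ν]
    {f : Y → ℝ} (hf : Integrable f ν) {k : X → Y → F}
    (hk : StronglyMeasurable (Function.uncurry k)) :
    ∫⁻ x, ‖∫ y, f y • k x y ∂ν‖ₑ ^ 2 ∂μ ≤
      (∫⁻ y, ‖f y‖ₑ ∂ν) * ∫⁻ y, ‖f y‖ₑ * ∫⁻ x, ‖k x y‖ₑ ^ 2 ∂μ ∂ν := by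
  have hm : AEMeasurable (Function.uncurry fun x y => ‖f y‖ₑ * ‖k x y‖ₑ ^ 2) (μ.prod ν) :=
    hf.1.comp_snd.enorm.mul (hk.enorm.pow_const 2).aemeasurable
  calc ∫⁻ x, ‖∫ y, f y • k x y ∂ν‖ₑ ^ 2 ∂μ
      ≤ ∫⁻ x, (∫⁻ y, ‖f y‖ₑ ∂ν) * ∫⁻ y, ‖f y‖ₑ * ‖k x y‖ₑ ^ 2 ∂ν ∂μ := by
        refine lintegral_mono fun x => ?_
        refine (pow_le_pow_left₀ zero_le (enorm_integral_le_lintegral_enorm _) 2).trans ?_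
        simp only [enorm_smul]
        exact lintegral_mul_sq_le hf.1.enorm
          (hk.enorm.comp measurable_prodMk_left).aemeasurable
    _ = (∫⁻ y, ‖f y‖ₑ ∂ν) * ∫⁻ y, ‖f y‖ₑ * ∫⁻ x, ‖k x y‖ₑ ^ 2 ∂μ ∂ν := by
        rw [lintegral_const_mul' _ _ hf.2.ne, lintegral_lintegral_swap hm]
        simp only [lintegral_const_mul' _ _ enorm_ne_top]

end WeightedCauchySchwarz

section BlowDown

variable {V : Type*} [NormedAddCommGroup V] [InnerProductSpace ℝ V] [MeasurableSpace V]

/-- The squared distance in `L²(B)` between `logGrad` and its translate by `z`. -/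
def logGradShift (μ : Measure V) (B : Set V) (z : V) : ENNReal :=
  ∫⁻ x in B, ‖logGrad (x - z) - logGrad x‖ₑ ^ 2 ∂μ

/-- The gradient of `u` looks like that of `-a log ‖x‖` at infinity: the rescaled gradients
`x ↦ r ∇u(r x)` tend to `-a x / ‖x‖²` in `L²`, locally away from the origin, as `r → ∞`. -/
def HasLogDecay (μ : Measure V) [CompleteSpace V] (u : V → ℝ) (a : ℝ) : Prop :=
  ∀ B : Set V, IsCompact B → 0 ∉ B →
    Tendsto (fun r : ℝ => eLpNorm (fun x => r • gradient u (r • x) + a • logGrad x) 2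
      (μ.restrict B)) atTop (𝓝 0)

variable [BorelSpace V] [SecondCountableTopology V] {μ : Measure V}

lemma measurable_logGradShift [SFinite μ] (B : Set V) : Measurable (logGradShift μ B) := by
  have hm : Measurable fun p : V × V => ‖logGrad (p.2 - p.1) - logGrad p.2‖ₑ ^ 2 := by fun_prop
  exact hm.lintegral_prod_right'

lemma tendsto_logGradShift [IsFiniteMeasureOnCompacts μ] {B : Set V} (hB : IsCompact B)
    (h0 : 0 ∉ B) : Tendsto (logGradShift μ B) (𝓝 0) (𝓝 0) := by
  have hcont (x : V) (hx : x ∈ B) :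
      ContinuousAt (fun p : V × V => ‖logGrad (p.2 - p.1) - logGrad p.2‖ₑ ^ 2) (0, x) := by
    have hx0 : x ≠ 0 := ne_of_mem_of_not_mem hx h0
    have hshift : ContinuousAt (fun p : V × V => logGrad (p.2 - p.1)) (0, x) :=
      (continuousAt_logGrad (z := x - 0) (by simpa using hx0)).comp_of_eq (by fun_prop) rfl
    have hsnd : ContinuousAt (fun p : V × V => logGrad p.2) (0, x) :=
      (continuousAt_logGrad hx0).comp_of_eq continuousAt_snd rfl
    exact (ENNReal.continuous_pow 2).continuousAt.comp (hshift.sub hsnd).enorm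
  have hbound : ∀ᶠ z in 𝓝 (0 : V), ∀ x ∈ B, ‖logGrad (x - z) - logGrad x‖ₑ ^ 2 < 1 :=
    hB.eventually_forall_of_forall_eventually fun x hx => (hcont x hx).eventually_lt_const (by simp)
  rw [← lintegral_zero (μ := μ.restrict B)]
  refine tendsto_lintegral_filter_of_dominated_convergence (fun _ => 1)
    (.of_forall fun z => by fun_prop) ?_ (by simpa using hB.measure_lt_top.ne) ?_
  · filter_upwards [hbound] with z hz
    filter_upwards [ae_restrict_mem hB.measurableSet] with x hx using (hz x hx).le
  · filter_upwards [ae_restrict_mem hB.measurableSet] with x hx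
    have : ContinuousAt (fun z => ‖logGrad (x - z) - logGrad x‖ₑ ^ 2) 0 :=
      (hcont x hx).comp (f := fun z => (z, x)) (by fun_prop)
    simpa [ContinuousAt] using this

end BlowDown

section LogDecay

variable {V : Type*} [NormedAddCommGroup V] [InnerProductSpace ℝ V] [FiniteDimensional ℝ V]
  [MeasurableSpace V] [BorelSpace V] {μ : Measure V} [μ.IsAddHaarMeasure]

lemma exists_logGradShift_le (h3 : 3 ≤ finrank ℝ V) {B : Set V} (hB : μ B ≠ ⊤) :
    ∃ M ≠ ⊤, ∀ z, logGradShift μ B z ≤ M := by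
  set ψ : V → ℝ := (Metric.ball 0 1).indicator fun z => (‖z‖ ^ 2)⁻¹
  have hψ0 (z : V) : 0 ≤ ψ z := Set.indicator_nonneg (fun _ _ => by positivity) _
  have hψi : Integrable ψ μ := integrable_indicator_ball_inv_norm_pow h3
  have hpt (x z : V) : ‖logGrad (x - z) - logGrad x‖ₑ ^ 2 ≤
      4 + 2 * (‖ψ (x - z)‖ₑ + ‖ψ x‖ₑ) := by
    have e : 4 + 2 * (‖ψ (x - z)‖ₑ + ‖ψ x‖ₑ) = ENNReal.ofReal (4 + 2 * (ψ (x - z) + ψ x)) := by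
      rw [Real.enorm_of_nonneg (hψ0 _), Real.enorm_of_nonneg (hψ0 _),
        ← ENNReal.ofReal_add (hψ0 _) (hψ0 _), ENNReal.ofReal_add zero_le_four
          (mul_nonneg zero_le_two (add_nonneg (hψ0 _) (hψ0 _))),
        ENNReal.ofReal_mul zero_le_two, ENNReal.ofReal_ofNat, ENNReal.ofReal_ofNat]
    rw [e, ← ofReal_norm, ← ENNReal.ofReal_pow (norm_nonneg _)]
    refine ENNReal.ofReal_le_ofReal ?_
    have h1 := inv_norm_pow_le_one_add_indicator_ball 2 (x - z)
    have h2 := inv_norm_pow_le_one_add_indicator_ball 2 x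
    have htri := norm_sub_le (logGrad (x - z)) (logGrad x)
    rw [norm_logGrad, norm_logGrad] at htri
    calc ‖logGrad (x - z) - logGrad x‖ ^ 2 ≤ (‖x - z‖⁻¹ + ‖x‖⁻¹) ^ 2 := by gcongr
      _ ≤ 2 * ((‖x - z‖⁻¹) ^ 2 + (‖x‖⁻¹) ^ 2) := add_sq_le
      _ ≤ 4 + 2 * (ψ (x - z) + ψ x) := by rw [inv_pow, inv_pow]; linarith
  set I := ∫⁻ x, ‖ψ x‖ₑ ∂μ
  have hI : I ≠ ⊤ := hψi.2.ne
  refine ⟨4 * μ B + 2 * (I + I), by finiteness, fun z => ?_⟩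
  calc logGradShift μ B z ≤ ∫⁻ x in B, (4 + 2 * (‖ψ (x - z)‖ₑ + ‖ψ x‖ₑ)) ∂μ :=
        lintegral_mono fun x => hpt x z
    _ ≤ 4 * μ B + 2 * ∫⁻ x, (‖ψ (x - z)‖ₑ + ‖ψ x‖ₑ) ∂μ := by
        rw [lintegral_add_left measurable_const, setLIntegral_const,
          lintegral_const_mul' _ _ (by simp)]
        gcongr
        exact Measure.restrict_le_self
    _ = 4 * μ B + 2 * (I + I) := by
        rw [lintegral_add_right' _ hψi.1.enorm, lintegral_sub_right_eq_self fun x => ‖ψ x‖ₑ]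

lemma tendsto_lintegral_mul_logGradShift (h3 : 3 ≤ finrank ℝ V) {f : V → ℝ} (hf : Integrable f μ)
    {B : Set V} (hB : IsCompact B) (h0 : 0 ∉ B) :
    Tendsto (fun r : ℝ => ∫⁻ y, ‖f y‖ₑ * logGradShift μ B (r⁻¹ • y) ∂μ) atTop (𝓝 0) := by
  obtain ⟨M, hMt, hM⟩ := exists_logGradShift_le h3 hB.measure_ne_top (μ := μ)
  rw [← lintegral_zero (μ := μ)]
  refine tendsto_lintegral_filter_of_dominated_convergence' (fun y => ‖f y‖ₑ * M)
    (.of_forall fun r => hf.1.enorm.mul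
      ((measurable_logGradShift B).comp (measurable_const_smul r⁻¹)).aemeasurable)
    (.of_forall fun r => .of_forall fun y => by gcongr; exact hM _) ?_ (.of_forall fun y => ?_)
  · rw [lintegral_mul_const' _ _ hMt]
    exact ENNReal.mul_ne_top hf.2.ne hMt
  · have hy : Tendsto (fun r : ℝ => r⁻¹ • y) atTop (𝓝 0) := by
      simpa using (tendsto_inv_atTop_zero (𝕜 := ℝ)).smul_const y
    simpa using ENNReal.Tendsto.const_mul (a := ‖f y‖ₑ) ((tendsto_logGradShift hB h0).comp hy)
      (Or.inr enorm_ne_top)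

lemma ae_smul_logField_smul_sub (h2 : 2 ≤ finrank ℝ V) {f : V → ℝ} (hf : Integrable f μ) {r : ℝ}
    (hr : r ≠ 0) : ∀ᵐ x ∂μ, r • logField μ f (r • x) - (∫ y, f y ∂μ) • logGrad x =
      ∫ y, f y • (logGrad (x - r⁻¹ • y) - logGrad x) ∂μ := by
  filter_upwards [(Measure.quasiMeasurePreserving_smul μ hr).ae
    (locallyIntegrableKernel_logGrad h2 hf).ae_integrable] with x hx
  have e (y : V) : f y • logGrad (x - r⁻¹ • y) = r • (f y • logGrad (r • x - y)) := by
    rw [smul_comm, ← smul_logGrad_smul hr (x - r⁻¹ • y), smul_sub, smul_inv_smul₀ hr]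
  simp only [smul_sub, e]
  have hxr : Integrable (fun y => r • f y • logGrad (r • x - y)) μ := hx.smul r
  rw [integral_sub hxr (hf.smul_const _), integral_smul, integral_smul_const, logField]

lemma hasLogDecay_of_ae_gradient_eq (h3 : 3 ≤ finrank ℝ V) {f u : V → ℝ} (hf : Integrable f μ)
    {c : ℝ} (hu : ∀ᵐ x ∂μ, gradient u x = -c • logField μ f x) :
    HasLogDecay μ u (c * ∫ y, f y ∂μ) := by
  intro B hB h0
  have hsq (r : ℝ) (hr : r ≠ 0) :
      ∫⁻ x in B, ‖r • logField μ f (r • x) - (∫ y, f y ∂μ) • logGrad x‖ₑ ^ 2 ∂μ ≤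
        (∫⁻ y, ‖f y‖ₑ ∂μ) * ∫⁻ y, ‖f y‖ₑ * logGradShift μ B (r⁻¹ • y) ∂μ := by
    refine le_of_eq_of_le (lintegral_congr_ae ?_) (lintegral_enorm_integral_smul_sq_le
      (k := fun x y => logGrad (x - r⁻¹ • y) - logGrad x) hf
      (Measurable.stronglyMeasurable (by unfold Function.uncurry; fun_prop)))
    filter_upwards [ae_restrict_of_ae (ae_smul_logField_smul_sub (by lia) hf hr)] with x hx
    rw [hx]
  have hlim : Tendsto (fun r : ℝ =>
      ∫⁻ x in B, ‖r • logField μ f (r • x) - (∫ y, f y ∂μ) • logGrad x‖ₑ ^ 2 ∂μ) atTop (𝓝 0) := by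
    refine tendsto_of_tendsto_of_tendsto_of_le_of_le' tendsto_const_nhds ?_
      (.of_forall fun r => zero_le) ((eventually_ne_atTop 0).mono hsq)
    simpa using ENNReal.Tendsto.const_mul (tendsto_lintegral_mul_logGradShift h3 hf hB h0)
      (Or.inr hf.2.ne)
  have hnorm : Tendsto (fun r : ℝ => ‖-c‖ₑ * eLpNorm (fun x =>
      r • logField μ f (r • x) - (∫ y, f y ∂μ) • logGrad x) 2 (μ.restrict B)) atTop (𝓝 0) := by
    simpa using ENNReal.Tendsto.const_mul (tendsto_eLpNorm_two_zero hlim) (Or.inr enorm_ne_top)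
  refine hnorm.congr' ?_
  filter_upwards [eventually_ne_atTop 0] with r hr
  rw [← eLpNorm_const_smul]
  refine eLpNorm_congr_ae (ae_restrict_of_ae ?_)
  filter_upwards [(Measure.quasiMeasurePreserving_smul μ hr).ae hu] with x hx
  simp only [Pi.smul_apply, hx]
  module

end LogDecay

section InnerL2

variable {X F : Type*} [MeasurableSpace X] {μ : Measure X} [NormedAddCommGroup F]
  [InnerProductSpace ℝ F]

lemma tendsto_integral_inner_of_tendsto_eLpNorm {ι : Type*} {l : Filter ι} {f g : ι → X → F}
    {f₀ g₀ : X → F} (hf : ∀ i, MemLp (f i) 2 μ) (hf₀ : MemLp f₀ 2 μ) (hg : ∀ i, MemLp (g i) 2 μ)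
    (hg₀ : MemLp g₀ 2 μ) (hflim : Tendsto (fun i => eLpNorm (f i - f₀) 2 μ) l (𝓝 0))
    (hglim : Tendsto (fun i => eLpNorm (g i - g₀) 2 μ) l (𝓝 0)) :
    Tendsto (fun i => ∫ x, inner ℝ (f i x) (g i x) ∂μ) l (𝓝 (∫ x, inner ℝ (f₀ x) (g₀ x) ∂μ)) := by
  have hinner {p q : X → F} (hp : MemLp p 2 μ) (hq : MemLp q 2 μ) :
      inner ℝ (hp.toLp p) (hq.toLp q) = ∫ x, inner ℝ (p x) (q x) ∂μ := by
    rw [L2.inner_def]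
    refine integral_congr_ae ?_
    filter_upwards [hp.coeFn_toLp, hq.coeFn_toLp] with x hpx hqx
    rw [hpx, hqx]
  simpa only [hinner] using ((Lp.tendsto_Lp_iff_tendsto_eLpNorm'' f hf f₀ hf₀).2 hflim).inner
    (𝕜 := ℝ) ((Lp.tendsto_Lp_iff_tendsto_eLpNorm'' g hg g₀ hg₀).2 hglim)

end InnerL2

lemma memLp_restrict_of_continuousOn {X F : Type*} [TopologicalSpace X] [T2Space X]
    [MeasurableSpace X] [OpensMeasurableSpace X] {μ : Measure X} [IsFiniteMeasureOnCompacts μ]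
    [NormedAddCommGroup F] {f : X → F} {B : Set X} (hf : ContinuousOn f B) (hB : IsCompact B)
    (p : ENNReal) : MemLp f p (μ.restrict B) := by
  have : IsFiniteMeasure (μ.restrict B) := ⟨by simpa using hB.measure_lt_top⟩
  obtain ⟨C, hC⟩ := hB.exists_bound_of_continuousOn hf
  exact MemLp.of_bound (hf.aestronglyMeasurable_of_isCompact hB hB.measurableSet) C
    ((ae_restrict_mem hB.measurableSet).mono hC)

section LogDecayLimits

variable {V : Type*} [NormedAddCommGroup V] [InnerProductSpace ℝ V]

lemma continuousOn_neg_smul_logGrad {B : Set V} (h0 : 0 ∉ B) (a : ℝ) :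
    ContinuousOn (fun x : V => -a • logGrad x) B := fun _ hx =>
  ((continuousAt_logGrad (ne_of_mem_of_not_mem hx h0)).const_smul (-a)).continuousWithinAt

variable [MeasurableSpace V] {μ : Measure V} [CompleteSpace V] {u : V → ℝ} {a : ℝ}

lemma HasLogDecay.tendsto_eLpNorm_sub (h : HasLogDecay μ u a) {B : Set V} (hB : IsCompact B)
    (h0 : 0 ∉ B) : Tendsto (fun r : ℝ => eLpNorm ((fun x => r • gradient u (r • x)) -
      fun x => -a • logGrad x) 2 (μ.restrict B)) atTop (𝓝 0) := by
  refine (h B hB h0).congr fun r => congrArg (eLpNorm · 2 (μ.restrict B)) ?_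
  ext1 x
  simp

variable [BorelSpace V] [IsFiniteMeasureOnCompacts μ]

namespace HasLogDecay

lemma tendsto_integral_inner (h : HasLogDecay μ u a) (hu : ContDiff ℝ 1 u) {G : V → V}
    (hG : Continuous G) (hGc : HasCompactSupport G) (h0 : 0 ∉ tsupport G) :
    Tendsto (fun r : ℝ => ∫ x, inner ℝ (r • gradient u (r • x)) (G x) ∂μ) atTop
      (𝓝 (-a * ∫ x, inner ℝ (logGrad x) (G x) ∂μ)) := by
  have hgrad := continuous_gradient hu
  have hset (g : V → V) :
      ∫ x in tsupport G, inner ℝ (g x) (G x) ∂μ = ∫ x, inner ℝ (g x) (G x) ∂μ :=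
    setIntegral_eq_integral_of_forall_compl_eq_zero fun x hx => by
      rw [image_eq_zero_of_notMem_tsupport hx, inner_zero_right]
  have := tendsto_integral_inner_of_tendsto_eLpNorm
    (fun r : ℝ => memLp_restrict_of_continuousOn (μ := μ) (by fun_prop) hGc 2)
    (memLp_restrict_of_continuousOn (continuousOn_neg_smul_logGrad h0 a) hGc 2)
    (fun _ => memLp_restrict_of_continuousOn hG.continuousOn hGc 2)
    (memLp_restrict_of_continuousOn hG.continuousOn hGc 2) (h.tendsto_eLpNorm_sub hGc h0)
    (by simp)
  simpa only [hset, real_inner_smul_left (logGrad _), integral_const_mul] using this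

lemma tendsto_integral_mul_norm_sq (h : HasLogDecay μ u a) (hu : ContDiff ℝ 1 u) {w : V → ℝ}
    (hw : Continuous w) (hwc : HasCompactSupport w) (h0 : 0 ∉ tsupport w) :
    Tendsto (fun r : ℝ => ∫ x, w x * ‖r • gradient u (r • x)‖ ^ 2 ∂μ) atTop
      (𝓝 (a ^ 2 * ∫ x, w x * ‖logGrad x‖ ^ 2 ∂μ)) := by
  have hgrad := continuous_gradient hu
  obtain ⟨C, hC⟩ := hw.bounded_above_of_compact_support hwc
  have hset (g : V → V) :
      ∫ x in tsupport w, inner ℝ (g x) (w x • g x) ∂μ = ∫ x, w x * ‖g x‖ ^ 2 ∂μ := by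
    simp only [real_inner_smul_right, real_inner_self_eq_norm_sq]
    exact setIntegral_eq_integral_of_forall_compl_eq_zero fun x hx => by
      rw [image_eq_zero_of_notMem_tsupport hx, zero_mul]
  have hlim := h.tendsto_eLpNorm_sub hwc h0
  have hlog := continuousOn_neg_smul_logGrad h0 a
  have hwlog : ContinuousOn (fun x => w x • -a • logGrad x) (tsupport w) :=
    hw.continuousOn.smul hlog
  have hwlim : Tendsto (fun r : ℝ => eLpNorm ((fun x => w x • r • gradient u (r • x)) -
      fun x => w x • -a • logGrad x) 2 (μ.restrict (tsupport w))) atTop (𝓝 0) := by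
    have hClim := ENNReal.Tendsto.const_mul (a := ENNReal.ofReal C) hlim
      (Or.inr ENNReal.ofReal_ne_top)
    rw [mul_zero] at hClim
    refine tendsto_of_tendsto_of_tendsto_of_le_of_le tendsto_const_nhds hClim (fun _ => zero_le)
      fun r => eLpNorm_le_mul_eLpNorm_of_ae_le_mul (.of_forall fun x => ?_) 2
    simp only [Pi.sub_apply, ← smul_sub]
    rw [norm_smul]
    gcongr
    exact hC x
  have := tendsto_integral_inner_of_tendsto_eLpNorm
    (fun r : ℝ => memLp_restrict_of_continuousOn (μ := μ) (by fun_prop) hwc 2)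
    (memLp_restrict_of_continuousOn hlog hwc 2)
    (fun r : ℝ => memLp_restrict_of_continuousOn (by fun_prop) hwc 2)
    (memLp_restrict_of_continuousOn hwlog hwc 2) hlim hwlim
  have hval : ∫ x in tsupport w, inner ℝ (-a • logGrad x) (w x • -a • logGrad x) ∂μ =
      a ^ 2 * ∫ x, w x * ‖logGrad x‖ ^ 2 ∂μ := by
    simp only [hset, norm_smul (-a), mul_pow, norm_neg, Real.norm_eq_abs, sq_abs,
      mul_left_comm _ (a ^ 2), integral_const_mul]
  rw [← hval]
  simpa only [hset] using this

end HasLogDecay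

end LogDecayLimits

section TestFunctions

variable {V : Type*} [NormedAddCommGroup V] [InnerProductSpace ℝ V]

lemma fderiv_norm_sq_mul_logGrad {ζ : V → ℝ} {x : V} (hζ : DifferentiableAt ℝ ζ x) (hx : x ≠ 0) :
    fderiv ℝ (fun x => ‖x‖ ^ 2 * ζ x) x (logGrad x) = 2 * ζ x + fderiv ℝ ζ x x := by
  have hsq : HasFDerivAt (fun x : V => ‖x‖ ^ 2) _ x := (hasStrictFDerivAt_norm_sq x).hasFDerivAt
  have : ‖x‖ ^ 2 ≠ 0 := by simpa using hx
  rw [(hsq.fun_mul hζ.hasFDerivAt).fderiv]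
  simp only [logGrad, map_smul, smul_eq_mul, add_apply, smul_apply, innerSL_apply_apply,
    real_inner_self_eq_norm_sq]
  field_simp
  ring

variable [FiniteDimensional ℝ V] [MeasurableSpace V] [BorelSpace V] {μ : Measure V}
  [μ.IsAddHaarMeasure]

lemma integral_fderiv_apply_self {ζ : V → ℝ} (hζ : ContDiff ℝ 1 ζ) (hζc : HasCompactSupport ζ) :
    ∫ x, fderiv ℝ ζ x x ∂μ = -(finrank ℝ V * ∫ x, ζ x ∂μ) := by
  let b := stdOrthonormalBasis ℝ V
  have hcoord (i : Fin (finrank ℝ V)) :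
      ∫ x, fderiv ℝ ζ x (b i) * inner ℝ (b i) x ∂μ = -∫ x, ζ x ∂μ := by
    have h := integral_mul_fderiv_of_hasCompactSupport (μ := μ) hζ hζc
      (innerSL ℝ (b i)).contDiff (b i)
    simp only [ContinuousLinearMap.fderiv, innerSL_apply_apply, real_inner_self_eq_norm_sq,
      b.norm_eq_one, one_pow, mul_one] at h
    rw [h, neg_neg]
  have hsum (x : V) : fderiv ℝ ζ x x = ∑ i, fderiv ℝ ζ x (b i) * inner ℝ (b i) x := by
    simpa only [map_sum, map_smul, smul_eq_mul, mul_comm] using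
      (congrArg (fderiv ℝ ζ x) (b.sum_repr' x)).symm
  simp only [hsum]
  rw [integral_finsetSum]
  · simp [hcoord]
  · intro i _
    have hcont : Continuous fun x => fderiv ℝ ζ x (b i) * inner ℝ (b i) x :=
      ((hζ.continuous_fderiv one_ne_zero).clm_apply continuous_const).mul (by fun_prop)
    exact hcont.integrable_of_hasCompactSupport (hζc.fderiv_apply ℝ (b i)).mul_right

lemma integral_fderiv_norm_sq_mul_logGrad (h1 : 1 ≤ finrank ℝ V) {ζ : V → ℝ}
    (hζ : ContDiff ℝ 1 ζ) (hζc : HasCompactSupport ζ) :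
    ∫ x, fderiv ℝ (fun x => ‖x‖ ^ 2 * ζ x) x (logGrad x) ∂μ =
      (2 - finrank ℝ V) * ∫ x, ζ x ∂μ := by
  have hself : Continuous fun x => fderiv ℝ ζ x x :=
    (hζ.continuous_fderiv one_ne_zero).clm_apply continuous_id
  have hself_supp : HasCompactSupport fun x => fderiv ℝ ζ x x :=
    (hζc.fderiv ℝ).mono' fun x hx => subset_tsupport _ fun h => hx (by simp [h])
  calc ∫ x, fderiv ℝ (fun x => ‖x‖ ^ 2 * ζ x) x (logGrad x) ∂μ
      = ∫ x, (2 * ζ x + fderiv ℝ ζ x x) ∂μ := by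
        refine integral_congr_ae ?_
        filter_upwards [ae_ne_of_finrank_pos h1 0] with x hx
        exact fderiv_norm_sq_mul_logGrad (hζ.differentiable one_ne_zero x) hx
    _ = (2 - finrank ℝ V) * ∫ x, ζ x ∂μ := by
        rw [integral_add ((hζ.continuous.integrable_of_hasCompactSupport hζc).const_mul 2)
          (hself.integrable_of_hasCompactSupport hself_supp), integral_const_mul,
          integral_fderiv_apply_self hζ hζc]
        ring

namespace HasLogDecay

variable {u ζ : V → ℝ} {a : ℝ}

lemma tendsto_integral_mul_inner_self (h : HasLogDecay μ u a) (h1 : 1 ≤ finrank ℝ V)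
    (hu : ContDiff ℝ 1 u) (hζ : Continuous ζ) (hζc : HasCompactSupport ζ) (h0 : 0 ∉ tsupport ζ) :
    Tendsto (fun r : ℝ => ∫ x, ζ x * inner ℝ (r • gradient u (r • x)) x ∂μ) atTop
      (𝓝 (-a * ∫ x, ζ x ∂μ)) := by
  have hval : ∫ x, ζ x ∂μ = ∫ x, inner ℝ (logGrad x) (ζ x • x) ∂μ := by
    refine integral_congr_ae ?_
    filter_upwards [ae_ne_of_finrank_pos h1 0] with x hx
    have : ‖x‖ ^ 2 ≠ 0 := by simpa using hx
    rw [logGrad, real_inner_smul_left, real_inner_smul_right, real_inner_self_eq_norm_sq]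
    field_simp
  rw [hval]
  simpa only [Pi.smul_apply', id, real_inner_smul_right] using
    h.tendsto_integral_inner hu (hζ.smul continuous_id) (hζc.smul_right (f' := id))
      fun hx => h0 (tsupport_smul_subset_left ζ id hx)

lemma tendsto_integral_norm_sq_mul_norm_sq (h : HasLogDecay μ u a) (h1 : 1 ≤ finrank ℝ V)
    (hu : ContDiff ℝ 1 u) (hζ : Continuous ζ) (hζc : HasCompactSupport ζ) (h0 : 0 ∉ tsupport ζ) :
    Tendsto (fun r : ℝ => ∫ x, ‖x‖ ^ 2 * ζ x * ‖r • gradient u (r • x)‖ ^ 2 ∂μ) atTop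
      (𝓝 (a ^ 2 * ∫ x, ζ x ∂μ)) := by
  have hval : ∫ x, ζ x ∂μ = ∫ x, ‖x‖ ^ 2 * ζ x * ‖logGrad x‖ ^ 2 ∂μ := by
    refine integral_congr_ae ?_
    filter_upwards [ae_ne_of_finrank_pos h1 0] with x hx
    have : ‖x‖ ≠ 0 := norm_ne_zero_iff.2 hx
    rw [norm_logGrad]
    field_simp
  rw [hval]
  exact h.tendsto_integral_mul_norm_sq hu (by fun_prop) hζc.mul_left
    fun hx => h0 (tsupport_mul_subset_right hx)

lemma tendsto_integral_fderiv_norm_sq_mul (h : HasLogDecay μ u a) (h1 : 1 ≤ finrank ℝ V)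
    (hu : ContDiff ℝ 1 u) (hζ : ContDiff ℝ 1 ζ) (hζc : HasCompactSupport ζ)
    (h0 : 0 ∉ tsupport ζ) :
    Tendsto (fun r : ℝ =>
      ∫ x, fderiv ℝ (fun x => ‖x‖ ^ 2 * ζ x) x (r • gradient u (r • x)) ∂μ) atTop
      (𝓝 (a * (finrank ℝ V - 2) * ∫ x, ζ x ∂μ)) := by
  set η : V → ℝ := fun x => ‖x‖ ^ 2 * ζ x
  have hη : ContDiff ℝ 1 η := (contDiff_norm_sq ℝ).mul hζ
  have hgradη : tsupport (gradient η) ⊆ tsupport ζ :=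
    (tsupport_comp_subset (map_zero (InnerProductSpace.toDual ℝ V).symm) (fderiv ℝ η)).trans
      ((tsupport_fderiv_subset ℝ).trans tsupport_mul_subset_right)
  have hlim := h.tendsto_integral_inner hu (continuous_gradient hη)
    (hζc.of_isClosed_subset (isClosed_tsupport _) hgradη) fun hx => h0 (hgradη hx)
  simp only [inner_gradient_right, conj_trivial] at hlim
  rw [integral_fderiv_norm_sq_mul_logGrad h1 hζ hζc] at hlim
  convert hlim using 2
  ring

end HasLogDecay

end TestFunctions

/-! ### Finite volume bounds the logarithmic slope from below -/

lemma tendsto_atTop_of_tendsto_mul_deriv {G G' : ℝ → ℝ} {L : ℝ} (hL : 0 < L)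
    (hG : ∀ᶠ r in atTop, HasDerivAt G (G' r) r)
    (hlim : Tendsto (fun r => r * G' r) atTop (𝓝 L)) : Tendsto G atTop atTop := by
  obtain ⟨r₀, hr₀⟩ := eventually_atTop.1 ((hG.and (eventually_gt_atTop 0)).and
    (hlim.eventually_const_le (half_lt_self hL)))
  have hderiv (r : ℝ) (hr : r₀ ≤ r) :
      HasDerivAt (fun r => G r - L / 2 * Real.log r) (G' r - L / 2 * r⁻¹) r :=
    (hr₀ r hr).1.1.sub ((Real.hasDerivAt_log (hr₀ r hr).1.2.ne').const_mul _)
  have hmono : MonotoneOn (fun r => G r - L / 2 * Real.log r) (Set.Ici r₀) := by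
    refine monotoneOn_of_hasDerivWithinAt_nonneg (convex_Ici r₀)
      (fun r hr => (hderiv r hr).continuousAt.continuousWithinAt)
      (fun r hr => (hderiv r (interior_subset hr)).hasDerivWithinAt) fun r hr => ?_
    obtain ⟨⟨_, hpos⟩, hle⟩ := hr₀ r (interior_subset hr)
    rw [sub_nonneg, mul_inv_le_iff₀ hpos, mul_comm (G' r)]
    exact hle
  refine tendsto_atTop_mono' _ ?_ (tendsto_atTop_add_const_left _ (G r₀ - L / 2 * Real.log r₀)
    (Real.tendsto_log_atTop.const_mul_atTop (half_pos hL)))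
  filter_upwards [eventually_ge_atTop r₀] with r hr
  linarith [hmono Set.self_mem_Ici hr hr]

lemma integral_add_integral_mul_le_integral_mul_exp {X : Type*} [MeasurableSpace X]
    {μ : Measure X} {ζ f : X → ℝ} (h0 : ∀ x, 0 ≤ ζ x) (hζ : Integrable ζ μ)
    (hf : Integrable (fun x => ζ x * f x) μ)
    (hexp : Integrable (fun x => ζ x * Real.exp (f x)) μ) :
    ∫ x, ζ x ∂μ + ∫ x, ζ x * f x ∂μ ≤ ∫ x, ζ x * Real.exp (f x) ∂μ := by
  rw [← integral_add hζ hf]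
  refine integral_mono (hζ.add hf) hexp fun x => ?_
  calc ζ x + ζ x * f x = ζ x * (f x + 1) := by ring
    _ ≤ ζ x * Real.exp (f x) := mul_le_mul_of_nonneg_left (Real.add_one_le_exp _) (h0 x)

section NormedSpace

variable {V : Type*} [NormedAddCommGroup V] [NormedSpace ℝ V] [MeasurableSpace V] [BorelSpace V]
  {μ : Measure V} {u ζ : V → ℝ}

lemma hasDerivAt_integral_mul_comp_smul [IsFiniteMeasureOnCompacts μ] (hu : ContDiff ℝ 1 u)
    (hζ : Continuous ζ) (hζc : HasCompactSupport ζ) (r : ℝ) :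
    HasDerivAt (fun r : ℝ => ∫ x, ζ x * u (r • x) ∂μ) (∫ x, ζ x * fderiv ℝ u (r • x) x ∂μ) r := by
  have := hu.continuous_fderiv one_ne_zero
  have hcont : Continuous fun p : ℝ × V => fderiv ℝ u (p.1 • p.2) p.2 := by fun_prop
  obtain ⟨M, hM⟩ := ((isCompact_closedBall r 1).prod hζc.isCompact).exists_bound_of_continuousOn
    hcont.continuousOn
  have hmeas {g : V → ℝ} (hg : Continuous g) : AEStronglyMeasurable (fun x => ζ x * g x) μ :=
    ((hζ.mul hg).integrable_of_hasCompactSupport hζc.mul_right).aestronglyMeasurable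
  refine (hasDerivAt_integral_of_dominated_loc_of_deriv_le (bound := fun x => |ζ x| * M)
    (F' := fun r x => ζ x * fderiv ℝ u (r • x) x) (Metric.closedBall_mem_nhds r one_pos)
    (.of_forall fun s => hmeas (by fun_prop)) ?_ (hmeas (by fun_prop)) ?_ ?_ ?_).2
  · exact Continuous.integrable_of_hasCompactSupport (by fun_prop) hζc.mul_right
  · refine .of_forall fun x s hs => ?_
    rw [norm_mul, Real.norm_eq_abs]
    by_cases hx : x ∈ tsupport ζ
    · gcongr
      exact hM (s, x) ⟨hs, hx⟩
    · simp [image_eq_zero_of_notMem_tsupport hx]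
  · exact (hζ.abs.integrable_of_hasCompactSupport hζc.norm).mul_const M
  · refine .of_forall fun x s _ => ?_
    have hsmul : HasDerivAt (fun s : ℝ => s • x) x s := by
      simpa using (hasDerivAt_id s).smul_const x
    exact ((hu.differentiable one_ne_zero (s • x)).hasFDerivAt.comp_hasDerivAt s hsmul).const_mul _

variable [FiniteDimensional ℝ V] [μ.IsAddHaarMeasure]

lemma tendsto_pow_finrank_mul_integral_mul_comp_smul {h : V → ℝ} (hζ : Continuous ζ)
    (hζc : HasCompactSupport ζ) (hh : Integrable h μ) :
    Tendsto (fun r : ℝ => r ^ finrank ℝ V * ∫ x, ζ x * h (r • x) ∂μ) atTop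
      (𝓝 (ζ 0 * ∫ x, h x ∂μ)) := by
  obtain ⟨M, hM⟩ := hζ.bounded_above_of_compact_support hζc
  have hlim : Tendsto (fun r : ℝ => ∫ x, ζ (r⁻¹ • x) * h x ∂μ) atTop (𝓝 (∫ x, ζ 0 * h x ∂μ)) := by
    refine tendsto_integral_filter_of_dominated_convergence (fun x => M * ‖h x‖)
      (.of_forall fun r => (Continuous.aestronglyMeasurable (by fun_prop)).mul hh.1)
      (.of_forall fun r => .of_forall fun x => ?_) (hh.norm.const_mul M) (.of_forall fun x => ?_)
    · rw [norm_mul]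
      gcongr
      exact hM _
    · have hx : Tendsto (fun r : ℝ => r⁻¹ • x) atTop (𝓝 0) := by
        simpa using (tendsto_inv_atTop_zero (𝕜 := ℝ)).smul_const x
      exact ((hζ.tendsto 0).comp hx).mul_const (h x)
  rw [← integral_const_mul]
  refine hlim.congr' ?_
  filter_upwards [eventually_gt_atTop 0] with r hr
  have hscale := Measure.integral_comp_smul μ (fun y => ζ (r⁻¹ • y) * h y) r
  simp only [inv_smul_smul₀ hr.ne'] at hscale
  rw [hscale, smul_eq_mul, abs_of_pos (by positivity), mul_inv_cancel_left₀ (by positivity)]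

lemma tendsto_integral_mul_exp_comp_smul (hζ : Continuous ζ) (hζc : HasCompactSupport ζ)
    (h0 : ζ 0 = 0) (hvol : Integrable (fun x => Real.exp (finrank ℝ V * u x)) μ) :
    Tendsto (fun r : ℝ =>
      ∫ x, ζ x * Real.exp (finrank ℝ V * (u (r • x) + Real.log r)) ∂μ) atTop (𝓝 0) := by
  have hlim := tendsto_pow_finrank_mul_integral_mul_comp_smul hζ hζc hvol
  rw [h0, zero_mul] at hlim
  refine hlim.congr' ?_
  filter_upwards [eventually_gt_atTop 0] with r hr
  rw [← integral_const_mul]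
  congr with x
  rw [mul_add, Real.exp_add, Real.exp_nat_mul (Real.log r), Real.exp_log hr]
  ring

end NormedSpace

section InnerProductSpace

variable {V : Type*} [NormedAddCommGroup V] [InnerProductSpace ℝ V] [FiniteDimensional ℝ V]
  [MeasurableSpace V] [BorelSpace V] {μ : Measure V} [μ.IsAddHaarMeasure]

lemma exists_contDiff_bump_zero_notMem_tsupport (h1 : 1 ≤ finrank ℝ V) :
    ∃ ζ : V → ℝ, ContDiff ℝ 1 ζ ∧ HasCompactSupport ζ ∧ 0 ∉ tsupport ζ ∧ (∀ x, 0 ≤ ζ x) ∧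
      0 < ∫ x, ζ x ∂μ := by
  have := finrank_pos_iff.1 h1
  obtain ⟨p, hp⟩ := exists_ne (0 : V)
  have hp0 : 0 < ‖p‖ := norm_pos_iff.2 hp
  let ζ : ContDiffBump p := ⟨‖p‖ / 4, ‖p‖ / 2, by positivity, by linarith⟩
  refine ⟨ζ, ζ.contDiff, ζ.hasCompactSupport, fun h => ?_, fun x => ζ.nonneg, ζ.integral_pos⟩
  have h : ‖p‖ ≤ ‖p‖ / 2 := by simpa [ζ.tsupport_eq] using h
  linarith

namespace HasLogDecay

variable {u : V → ℝ} {a : ℝ}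

lemma tendsto_integral_mul_add_log_atTop (h : HasLogDecay μ u a) (h1 : 1 ≤ finrank ℝ V)
    (ha : a < 1) (hu : ContDiff ℝ 1 u) {ζ : V → ℝ} (hζ : Continuous ζ) (hζc : HasCompactSupport ζ)
    (h0 : 0 ∉ tsupport ζ) (hI : 0 < ∫ x, ζ x ∂μ) :
    Tendsto (fun r : ℝ => ∫ x, ζ x * (u (r • x) + Real.log r) ∂μ) atTop atTop := by
  have hu0 := hu.continuous
  have hsplit (r : ℝ) : ∫ x, ζ x * u (r • x) ∂μ + (∫ x, ζ x ∂μ) * Real.log r =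
      ∫ x, ζ x * (u (r • x) + Real.log r) ∂μ := by
    simp only [mul_add]
    have hint : Integrable (fun x => ζ x * u (r • x)) μ :=
      Continuous.integrable_of_hasCompactSupport (by fun_prop) hζc.mul_right
    rw [integral_add hint ((hζ.integrable_of_hasCompactSupport hζc).mul_const _),
      integral_mul_const]
  have hderiv : ∀ᶠ r in atTop, HasDerivAt
      (fun r => ∫ x, ζ x * u (r • x) ∂μ + (∫ x, ζ x ∂μ) * Real.log r)
      (∫ x, ζ x * fderiv ℝ u (r • x) x ∂μ + (∫ x, ζ x ∂μ) * r⁻¹) r := by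
    filter_upwards [eventually_ne_atTop 0] with r hr
    exact (hasDerivAt_integral_mul_comp_smul hu hζ hζc r).add
      ((Real.hasDerivAt_log hr).const_mul _)
  simp only [← hsplit]
  refine tendsto_atTop_of_tendsto_mul_deriv (mul_pos (sub_pos.2 ha) hI) hderiv ?_
  have hlim := (h.tendsto_integral_mul_inner_self h1 hu hζ hζc h0).add_const (∫ x, ζ x ∂μ)
  rw [show -a * ∫ x, ζ x ∂μ + ∫ x, ζ x ∂μ = (1 - a) * ∫ x, ζ x ∂μ by ring] at hlim
  refine hlim.congr' ?_
  filter_upwards [eventually_ne_atTop 0] with r hr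
  simp only [real_inner_smul_left, inner_gradient_left, mul_left_comm _ r, integral_const_mul]
  field_simp

lemma one_le (h : HasLogDecay μ u a) (h1 : 1 ≤ finrank ℝ V) (hu : ContDiff ℝ 1 u)
    (hvol : Integrable (fun x => Real.exp (finrank ℝ V * u x)) μ) : 1 ≤ a := by
  by_contra! ha
  obtain ⟨ζ, hζ1, hζc, h0, hζ0, hI⟩ := exists_contDiff_bump_zero_notMem_tsupport (μ := μ) h1
  have hζ := hζ1.continuous
  have hu0 := hu.continuous
  have hjensen (r : ℝ) :
      ∫ x, ζ x ∂μ + finrank ℝ V * ∫ x, ζ x * (u (r • x) + Real.log r) ∂μ ≤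
        ∫ x, ζ x * Real.exp (finrank ℝ V * (u (r • x) + Real.log r)) ∂μ := by
    rw [← integral_const_mul]
    simp only [mul_left_comm (finrank ℝ V : ℝ)]
    exact integral_add_integral_mul_le_integral_mul_exp hζ0
      (hζ.integrable_of_hasCompactSupport hζc)
      (Continuous.integrable_of_hasCompactSupport (by fun_prop) hζc.mul_right)
      (Continuous.integrable_of_hasCompactSupport (by fun_prop) hζc.mul_right)
  refine not_tendsto_nhds_of_tendsto_atTop (tendsto_atTop_mono hjensen ?_) 0
    (tendsto_integral_mul_exp_comp_smul hζ hζc (image_eq_zero_of_notMem_tsupport h0) hvol)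
  exact tendsto_atTop_add_const_left _ _ ((h.tendsto_integral_mul_add_log_atTop h1 ha hu hζ hζc
    h0 hI).const_mul_atTop (by exact_mod_cast h1))

end HasLogDecay

end InnerProductSpace

/-! ### Scalar curvature under blow-down -/

lemma pow_le_pow_add_inv_pow_mul_pow {j k : ℕ} (hjk : j ≤ k) {t δ : ℝ} (ht : 0 ≤ t) (hδ : 0 < δ) :
    t ^ j ≤ δ ^ j + (δ ^ (k - j))⁻¹ * t ^ k := by
  rcases le_total t δ with h | h
  · exact (pow_le_pow_left₀ ht h j).trans (le_add_of_nonneg_right (by positivity))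
  · refine le_trans ?_ (le_add_of_nonneg_left (by positivity))
    rw [le_inv_mul_iff₀ (by positivity)]
    calc δ ^ (k - j) * t ^ j ≤ t ^ (k - j) * t ^ j := by gcongr
      _ = t ^ k := by rw [← pow_add, Nat.sub_add_cancel hjk]

lemma tendsto_integral_mul_pow_zero_of_le {X ι : Type*} [MeasurableSpace X] {μ : Measure X}
    {l : Filter ι} {j k : ℕ} (hj : j ≠ 0) (hjk : j ≤ k) {w : X → ℝ} {t : ι → X → ℝ}
    (hw0 : ∀ x, 0 ≤ w x) (ht0 : ∀ i x, 0 ≤ t i x) (hw : Integrable w μ)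
    (ht : ∀ i, Integrable (fun x => w x * t i x ^ k) μ)
    (hlim : Tendsto (fun i => ∫ x, w x * t i x ^ k ∂μ) l (𝓝 0)) :
    Tendsto (fun i => ∫ x, w x * t i x ^ j ∂μ) l (𝓝 0) := by
  have hbound (δ : ℝ) (hδ : 0 < δ) (i : ι) : ∫ x, w x * t i x ^ j ∂μ ≤
      δ ^ j * ∫ x, w x ∂μ + (δ ^ (k - j))⁻¹ * ∫ x, w x * t i x ^ k ∂μ := by
    rw [← integral_const_mul, ← integral_const_mul,
      ← integral_add (hw.const_mul _) ((ht i).const_mul _)]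
    refine integral_mono_of_nonneg (.of_forall fun x => mul_nonneg (hw0 x) (pow_nonneg (ht0 i x) j))
      ((hw.const_mul _).add ((ht i).const_mul _)) (.of_forall fun x => ?_)
    calc w x * t i x ^ j ≤ w x * (δ ^ j + (δ ^ (k - j))⁻¹ * t i x ^ k) :=
          mul_le_mul_of_nonneg_left (pow_le_pow_add_inv_pow_mul_pow hjk (ht0 i x) hδ) (hw0 x)
      _ = δ ^ j * w x + (δ ^ (k - j))⁻¹ * (w x * t i x ^ k) := by ring
  refine tendsto_order.2 ⟨fun ε hε => .of_forall fun i => hε.trans_le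
    (integral_nonneg fun x => mul_nonneg (hw0 x) (pow_nonneg (ht0 i x) j)), fun ε hε => ?_⟩
  have hδlim : Tendsto (fun δ : ℝ => δ ^ j * ∫ x, w x ∂μ) (𝓝 0) (𝓝 0) :=
    Continuous.tendsto' (by fun_prop) 0 0 (by simp [hj])
  have hsmall : ∀ᶠ δ : ℝ in 𝓝[>] 0, δ ^ j * ∫ x, w x ∂μ < ε :=
    nhdsWithin_le_nhds (hδlim.eventually_lt_const hε)
  obtain ⟨δ, hδε, hδ⟩ := (hsmall.and self_mem_nhdsWithin).exists
  have hlimδ := (hlim.const_mul (δ ^ (k - j))⁻¹).const_add (δ ^ j * ∫ x, w x ∂μ)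
  rw [mul_zero, add_zero] at hlimδ
  filter_upwards [hlimδ.eventually_lt_const hδε] with i hi using (hbound δ hδ i).trans_lt hi

lemma eventually_forall_le_norm_smul {V : Type*} [NormedAddCommGroup V] [NormedSpace ℝ V]
    {B : Set V} (hB : IsClosed B) (h0 : 0 ∉ B) (R : ℝ) :
    ∀ᶠ r : ℝ in atTop, ∀ x ∈ B, R ≤ ‖r • x‖ := by
  obtain ⟨ε, hε, hεB⟩ := Metric.isOpen_iff.1 hB.isOpen_compl 0 h0
  filter_upwards [(tendsto_id.atTop_mul_const hε).eventually_ge_atTop R, eventually_ge_atTop 0]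
    with r hr hr0 x hx
  have hεx : ε ≤ ‖x‖ := by
    by_contra! hlt
    exact hεB (mem_ball_zero_iff.2 hlt) hx
  rw [norm_smul, Real.norm_of_nonneg hr0]
  exact hr.trans (mul_le_mul_of_nonneg_left hεx hr0)

lemma gradient_comp_smul {V : Type*} [NormedAddCommGroup V] [InnerProductSpace ℝ V]
    [CompleteSpace V] (u : V → ℝ) (r : ℝ) (x : V) :
    gradient (fun y => u (r • y)) x = r • gradient u (r • x) := by
  refine ext_inner_right ℝ fun v => ?_
  rw [inner_gradient_left, real_inner_smul_left, inner_gradient_left, fderiv_comp_smul]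
  rfl

section Laplacian

variable {n : ℕ} {u : E n → ℝ}

lemma contDiff_one_fderiv_apply (hu : ContDiff ℝ 2 u) (v : E n) :
    ContDiff ℝ 1 fun x => fderiv ℝ u x v :=
  (hu.fderiv_right (by norm_num)).clm_apply contDiff_const

lemma continuous_lap (hu : ContDiff ℝ 2 u) : Continuous (lap u) :=
  continuous_finsetSum _ fun _ _ =>
    ((contDiff_one_fderiv_apply hu _).continuous_fderiv one_ne_zero).clm_apply continuous_const

lemma lap_comp_smul (hu : ContDiff ℝ 2 u) (r : ℝ) (x : E n) :
    lap (fun y => u (r • y)) x = r ^ 2 * lap u (r • x) := by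
  simp only [lap, Finset.mul_sum]
  refine Finset.sum_congr rfl fun i _ => ?_
  set v : E n := EuclideanSpace.single i 1
  have hfirst : (fun y => fderiv ℝ (fun y => u (r • y)) y v) =
      fun y => r • (fun z => fderiv ℝ u z v) (r • y) := by
    ext y
    rw [fderiv_comp_smul]
    rfl
  have hdiff : DifferentiableAt ℝ (fun y => (fun z => fderiv ℝ u z v) (r • y)) x :=
    ((contDiff_one_fderiv_apply hu v).comp (contDiff_const_smul r)).differentiable one_ne_zero x
  rw [hfirst, fderiv_fun_const_smul hdiff, fderiv_comp_smul (f := fun z => fderiv ℝ u z v),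
    smul_smul, ← pow_two]
  rfl

lemma fderiv_apply_gradient_eq_sum (η : E n → ℝ) (x : E n) :
    fderiv ℝ η x (gradient u x) =
      ∑ i, fderiv ℝ η x (EuclideanSpace.single i 1) * fderiv ℝ u x (EuclideanSpace.single i 1) := by
  rw [← inner_gradient_left, ← (EuclideanSpace.basisFun (Fin n) ℝ).sum_inner_mul_inner]
  simp only [EuclideanSpace.basisFun_apply, inner_gradient_left, inner_gradient_right,
    conj_trivial]

lemma integral_mul_neg_lap {η : E n → ℝ} (hη : ContDiff ℝ 1 η) (hηc : HasCompactSupport η)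
    (hu : ContDiff ℝ 2 u) :
    ∫ x, η x * -lap u x = ∫ x, fderiv ℝ η x (gradient u x) := by
  have hu1 (v : E n) := contDiff_one_fderiv_apply hu v
  have hparts (v : E n) : ∫ x, η x * -fderiv ℝ (fun y => fderiv ℝ u y v) x v =
      ∫ x, fderiv ℝ η x v * fderiv ℝ u x v := by
    simp only [mul_neg, integral_neg]
    rw [integral_mul_fderiv_of_hasCompactSupport hη hηc (hu1 v), neg_neg]
  simp only [fderiv_apply_gradient_eq_sum, lap, ← Finset.sum_neg_distrib, Finset.mul_sum]
  rw [integral_finsetSum, integral_finsetSum]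
  · exact Finset.sum_congr rfl fun i _ => hparts _
  · intro i _
    exact (((hη.continuous_fderiv one_ne_zero).clm_apply continuous_const).mul
      (hu1 _).continuous).integrable_of_hasCompactSupport (hηc.fderiv_apply ℝ _).mul_right
  · intro i _
    exact (hη.continuous.mul (((hu1 _).continuous_fderiv one_ne_zero).clm_apply
      continuous_const).neg).integrable_of_hasCompactSupport hηc.mul_right

end Laplacian

section ScalarCurvature

variable {n : ℕ} {u : E n → ℝ}

lemma continuous_Rg (hu : ContDiff ℝ 2 u) : Continuous (Rg n u) := by
  have hgrad := continuous_gradient (hu.of_le one_le_two)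
  have hlap := continuous_lap hu
  have hu0 := hu.continuous
  unfold Rg
  fun_prop

lemma Rg_mul_exp_add_log_sq (u : E n → ℝ) {r : ℝ} (hr : 0 < r) (x : E n) :
    Rg n u x * Real.exp (u x + Real.log r) ^ 2 =
      2 * (n - 1) * (r ^ 2 * (-lap u x - (n - 2) / 2 * ‖gradient u x‖ ^ 2)) := by
  have hcancel : Real.exp (-2 * u x) * Real.exp (u x) ^ 2 = 1 := by
    rw [← Real.exp_nat_mul, ← Real.exp_add]
    simp
  rw [Real.exp_add, Real.exp_log hr, Rg]
  linear_combination
    2 * (n - 1) * r ^ 2 * (-lap u x - (n - 2) / 2 * ‖gradient u x‖ ^ 2) * hcancel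

namespace HasLogDecay

variable {a : ℝ} {ζ : E n → ℝ}

lemma tendsto_integral_norm_sq_mul_Rg (h : HasLogDecay volume u a) (hn : 1 ≤ n)
    (hu : ContDiff ℝ 2 u) (hζ : ContDiff ℝ 1 ζ) (hζc : HasCompactSupport ζ)
    (h0 : 0 ∉ tsupport ζ) :
    Tendsto (fun r : ℝ =>
      ∫ x, ‖x‖ ^ 2 * ζ x * (Rg n u (r • x) * Real.exp (u (r • x) + Real.log r) ^ 2)) atTop
      (𝓝 ((n - 1) * (n - 2) * (a * (2 - a)) * ∫ x, ζ x)) := by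
  have hu1 : ContDiff ℝ 1 u := hu.of_le one_le_two
  have hgrad := continuous_gradient hu1
  have hlap := continuous_lap hu
  have hζ' := hζ.continuous
  have hd : 1 ≤ finrank ℝ (E n) := by simpa using hn
  have hdim : (finrank ℝ (E n) : ℝ) = n := by simp
  have hηc : HasCompactSupport fun x => ‖x‖ ^ 2 * ζ x := hζc.mul_left
  have hparts (r : ℝ) : ∫ x, ‖x‖ ^ 2 * ζ x * (r ^ 2 * -lap u (r • x)) =
      ∫ x, fderiv ℝ (fun x => ‖x‖ ^ 2 * ζ x) x (r • gradient u (r • x)) := by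
    simp only [← gradient_comp_smul, mul_neg (r ^ 2), ← lap_comp_smul hu]
    exact integral_mul_neg_lap ((contDiff_norm_sq ℝ).mul hζ) hηc (hu.comp (contDiff_const_smul r))
  have hlim := ((h.tendsto_integral_fderiv_norm_sq_mul hd hu1 hζ hζc h0).sub
    ((h.tendsto_integral_norm_sq_mul_norm_sq hd hu1 hζ' hζc h0).const_mul
      (((n : ℝ) - 2) / 2))).const_mul (2 * (n - 1 : ℝ))
  rw [hdim, show 2 * (n - 1 : ℝ) * (a * (n - 2) * (∫ x, ζ x) - (n - 2) / 2 * (a ^ 2 * ∫ x, ζ x)) =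
    (n - 1) * (n - 2) * (a * (2 - a)) * ∫ x, ζ x by ring] at hlim
  refine hlim.congr' ?_
  filter_upwards [eventually_gt_atTop 0] with r hr
  rw [← hparts, ← integral_const_mul, ← integral_sub, ← integral_const_mul]
  · congr with x
    rw [Rg_mul_exp_add_log_sq u hr, norm_smul, mul_pow, Real.norm_eq_abs, sq_abs]
    ring
  · exact Continuous.integrable_of_hasCompactSupport (by fun_prop) hηc.mul_right
  · exact (Continuous.integrable_of_hasCompactSupport (by fun_prop) hηc.mul_right).const_mul _

end HasLogDecay

lemma tendsto_integral_mul_Rg_zero (hn : 2 ≤ n) (hu : ContDiff ℝ 2 u) {C : ℝ}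
    (hR : ∃ R : ℝ, ∀ x : E n, R ≤ ‖x‖ → 0 ≤ Rg n u x ∧ Rg n u x ≤ C)
    (hvol : Integrable fun x : E n => Real.exp (n * u x)) {w : E n → ℝ} (hw : Continuous w)
    (hwc : HasCompactSupport w) (h0 : 0 ∉ tsupport w) (hw0 : ∀ x, 0 ≤ w x) :
    Tendsto (fun r : ℝ =>
      ∫ x, w x * (Rg n u (r • x) * Real.exp (u (r • x) + Real.log r) ^ 2)) atTop (𝓝 0) := by
  have hu0 := hu.continuous
  have hint {g : E n → ℝ} (hg : Continuous g) : Integrable fun x => w x * g x :=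
    (hw.mul hg).integrable_of_hasCompactSupport hwc.mul_right
  have hvol_lim : Tendsto (fun r : ℝ =>
      ∫ x, w x * Real.exp (u (r • x) + Real.log r) ^ n) atTop (𝓝 0) := by
    have hlim := tendsto_integral_mul_exp_comp_smul (u := u) hw hwc
      (image_eq_zero_of_notMem_tsupport h0) (by simpa using hvol)
    simpa only [finrank_euclideanSpace_fin, Real.exp_nat_mul] using hlim
  have hsq_lim := (tendsto_integral_mul_pow_zero_of_le two_ne_zero hn hw0
    (fun r x => (Real.exp_pos _).le) (hw.integrable_of_hasCompactSupport hwc)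
    (fun r => hint (by fun_prop)) hvol_lim).const_mul C
  rw [mul_zero] at hsq_lim
  obtain ⟨R, hR⟩ := hR
  have hcurv : ∀ᶠ r : ℝ in atTop, ∀ x, 0 ≤ w x * Rg n u (r • x) ∧
      w x * Rg n u (r • x) ≤ w x * C := by
    filter_upwards [eventually_forall_le_norm_smul (isClosed_tsupport w) h0 R] with r hr x
    by_cases hx : x ∈ tsupport w
    · obtain ⟨hlow, hup⟩ := hR _ (hr x hx)
      exact ⟨mul_nonneg (hw0 x) hlow, mul_le_mul_of_nonneg_left hup (hw0 x)⟩
    · simp [image_eq_zero_of_notMem_tsupport hx]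
  have hRg := continuous_Rg hu
  refine tendsto_of_tendsto_of_tendsto_of_le_of_le' tendsto_const_nhds hsq_lim ?_ ?_
  · filter_upwards [hcurv] with r hr
    refine integral_nonneg fun x => ?_
    rw [← mul_assoc]
    exact mul_nonneg (hr x).1 (sq_nonneg _)
  · filter_upwards [hcurv] with r hr
    rw [← integral_const_mul]
    refine integral_mono (hint (by fun_prop)) ((hint (by fun_prop)).const_mul C) fun x => ?_
    calc w x * (Rg n u (r • x) * Real.exp (u (r • x) + Real.log r) ^ 2)
        ≤ w x * C * Real.exp (u (r • x) + Real.log r) ^ 2 := by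
          rw [← mul_assoc]
          exact mul_le_mul_of_nonneg_right (hr x).2 (sq_nonneg _)
      _ = C * (w x * Real.exp (u (r • x) + Real.log r) ^ 2) := by ring

lemma HasLogDecay.eq_two {a C : ℝ} (h : HasLogDecay volume u a) (hn : 3 ≤ n)
    (hu : ContDiff ℝ 2 u) (hR : ∃ R : ℝ, ∀ x : E n, R ≤ ‖x‖ → 0 ≤ Rg n u x ∧ Rg n u x ≤ C)
    (hvol : Integrable fun x : E n => Real.exp (n * u x)) : a = 2 := by
  have hd : 1 ≤ finrank ℝ (E n) := by simp; lia
  have ha : 1 ≤ a := h.one_le hd (hu.of_le one_le_two) (by simpa using hvol)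
  obtain ⟨ζ, hζ, hζc, h0, hζ0, hI⟩ := exists_contDiff_bump_zero_notMem_tsupport (μ := volume) hd
  have hzero := tendsto_nhds_unique
    (h.tendsto_integral_norm_sq_mul_Rg (by lia) hu hζ hζc h0)
    (tendsto_integral_mul_Rg_zero (by lia) hu hR hvol ((continuous_norm.pow 2).mul hζ.continuous)
      hζc.mul_left (fun hx => h0 (tsupport_mul_subset_right hx))
      fun x => mul_nonneg (sq_nonneg _) (hζ0 x))
  have hn3 : (3 : ℝ) ≤ n := by exact_mod_cast hn
  have hn1 : (n : ℝ) - 1 ≠ 0 := by linarith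
  have hn2 : (n : ℝ) - 2 ≠ 0 := by linarith
  have ha0 : a ≠ 0 := by linarith
  simp only [mul_eq_zero, hn1, hn2, ha0, hI.ne', false_or, or_false] at hzero
  linarith

end ScalarCurvature

/-! ### Normal solutions -/

section InfiniteVolume

variable {V : Type*} [NormedAddCommGroup V]

lemma abs_log_norm_div_norm_sub_le {x y : V} (h : 2 * ‖x‖ < ‖y‖) :
    |Real.log (‖y‖ / ‖x - y‖)| ≤ 4 := by
  have hx := norm_nonneg x
  have hlow : ‖y‖ - ‖x‖ ≤ ‖x - y‖ := norm_sub_rev x y ▸ norm_sub_norm_le y x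
  have hup := norm_sub_le x y
  have hsub : 0 < ‖x - y‖ := by linarith
  have hdiv : ‖y‖ / ‖x - y‖ ≤ 2 := by rw [div_le_iff₀ hsub]; linarith
  have hinv : (‖y‖ / ‖x - y‖)⁻¹ ≤ 2 := by
    rw [inv_div, div_le_iff₀ (by linarith)]
    linarith
  linarith [abs_log_le_add_inv (show 0 ≤ ‖y‖ / ‖x - y‖ by positivity)]

variable [NormedSpace ℝ V] [FiniteDimensional ℝ V] [MeasurableSpace V] [BorelSpace V]
  {μ : Measure V} [μ.IsAddHaarMeasure]

lemma eq_zero_of_integrableOn_const_compl_closedBall (h1 : 1 ≤ finrank ℝ V) {b R : ℝ}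
    (h : IntegrableOn (fun _ : V => b) (Metric.closedBall 0 R)ᶜ μ) : b = 0 := by
  by_contra hb
  have := finrank_pos_iff.1 h1
  have := NormedSpace.noncompactSpace ℝ V
  rw [integrableOn_const_iff] at h
  have hfin : μ (Metric.closedBall 0 R)ᶜ < ⊤ := h.resolve_left (by simpa using hb)
  have huniv : μ Set.univ < ⊤ := by
    rw [← Set.union_compl_self (Metric.closedBall (0 : V) R)]
    exact (measure_union_le _ _).trans_lt (ENNReal.add_lt_top.2 ⟨measure_closedBall_lt_top, hfin⟩)
  exact huniv.ne (measure_univ_of_isAddLeftInvariant μ)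

lemma eq_zero_of_integrable_log_mul_add (h1 : 1 ≤ finrank ℝ V) {f : V → ℝ}
    (hf : Integrable f μ) {x : V} {b : ℝ}
    (h : Integrable (fun y => Real.log (‖y‖ / ‖x - y‖) * f y + b) μ) : b = 0 := by
  set S : Set V := (Metric.closedBall 0 (2 * ‖x‖))ᶜ
  have hS : MeasurableSet S := Metric.isClosed_closedBall.measurableSet.compl
  have hlog : IntegrableOn (fun y => Real.log (‖y‖ / ‖x - y‖) * f y) S μ := by
    refine hf.integrableOn.bdd_mul (c := 4) (Measurable.aestronglyMeasurable (by fun_prop)) ?_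
    filter_upwards [ae_restrict_mem hS] with y hy
    exact abs_log_norm_div_norm_sub_le (by simpa [S] using hy)
  refine eq_zero_of_integrableOn_const_compl_closedBall h1
    ((h.integrableOn.sub hlog).congr_fun (fun y _ => ?_) hS)
  exact add_sub_cancel_left _ b

lemma exists_ne_of_integrable_exp (h1 : 1 ≤ finrank ℝ V) {u : V → ℝ} {k : ℝ}
    (hvol : Integrable (fun x => Real.exp (k * u x)) μ) (c : ℝ) : ∃ x, u x ≠ c := by
  by_contra! hu
  simp only [hu] at hvol
  exact Real.exp_ne_zero _
    (eq_zero_of_integrableOn_const_compl_closedBall h1 (R := 0) hvol.integrableOn)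

end InfiniteVolume

section Main

variable {n : ℕ} {u : E n → ℝ}

/- In `IsNormal` the constant `C` stands inside the integral, as `∫` extends as far as possible.
If `C ≠ 0` the integrand is not integrable, the integral is `0` by convention, and `u = 0`. -/
lemma IsNormal.eq_mul_integral {Q : E n → ℝ} (h : IsNormal n u Q) (hn : 1 ≤ n)
    (hint : Integrable fun y => Q y * Real.exp (n * u y)) (hne : ∃ x, u x ≠ 0) (x : E n) :
    u x = 2 / (Nat.factorial (n - 1) * sphereVol n) *
      ∫ y, Real.log (‖y‖ / ‖x - y‖) * (Q y * Real.exp (n * u y)) := by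
  obtain ⟨C, hC⟩ := h
  have hC0 : C = 0 := by
    by_contra hC0
    obtain ⟨z, hz⟩ := hne
    refine hz ?_
    rw [hC z, integral_undef fun hi =>
      hC0 (eq_zero_of_integrable_log_mul_add (by simpa using hn) hint hi), mul_zero]
  simpa only [hC0, add_zero] using hC x

lemma mul_integral_eq_two (hn : 3 ≤ n) (hu : ContDiff ℝ 2 u) {f : E n → ℝ} (hf : Integrable f)
    {c C₀ C : ℝ} (hrep : ∀ x, u x = c * (∫ y, Real.log (‖y‖ / ‖x - y‖) * f y) + C₀)
    (hR : ∃ R : ℝ, ∀ x : E n, R ≤ ‖x‖ → 0 ≤ Rg n u x ∧ Rg n u x ≤ C)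
    (hvol : Integrable fun x : E n => Real.exp (n * u x)) : c * ∫ y, f y = 2 := by
  have hd : 3 ≤ finrank ℝ (E n) := by simpa using hn
  have h2 : 2 ≤ finrank ℝ (E n) := le_trans (by norm_num) hd
  have h1 : 1 ≤ finrank ℝ (E n) := le_trans (by norm_num) hd
  obtain ⟨C', hC'⟩ := exists_ae_eq_add_logPotential h2 hf hu.continuous hrep
    (exists_ne_of_integrable_exp h1 hvol C₀)
  have hgrad := ae_gradient_eq_smul_logField h2 hf (hu.of_le one_le_two) hC'
  exact (hasLogDecay_of_ae_gradient_eq hd hf hgrad).eq_two hn hu hR hvol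

theorem stmt_12_general (hn : 3 ≤ n) {Q : E n → ℝ} (hu : ContDiff ℝ 2 u)
    (hint : Integrable (fun y => Q y * Real.exp (n * u y))) (hnorm : IsNormal n u Q) {C : ℝ}
    (hR : ∃ R : ℝ, ∀ x : E n, R ≤ ‖x‖ → 0 ≤ Rg n u x ∧ Rg n u x ≤ C)
    (hvol : Integrable (fun x : E n => Real.exp (n * u x))) :
    ∫ x, Q x * Real.exp (n * u x) = Nat.factorial (n - 1) * sphereVol n := by
  have hne := exists_ne_of_integrable_exp (by simp; lia) hvol 0
  have hmass := mul_integral_eq_two hn hu hint (C₀ := 0)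
    (by simpa only [add_zero] using hnorm.eq_mul_integral (by lia) hint hne) hR hvol
  have hA : (Nat.factorial (n - 1) * sphereVol n : ℝ) ≠ 0 := by
    intro hA
    norm_num [hA] at hmass
  rw [div_mul_eq_mul_div, div_eq_iff hA] at hmass
  linarith

end Main

/-- `0 ≤ R_g ≤ C` near infinity and finite volume force
`∫ Q e^{nu} = (n−1)!|𝕊ⁿ|`. -/
theorem stmt_12 (n : ℕ) (hn : 4 ≤ n) (hne : Even n)
    (u Q : E n → ℝ) (hu : ContDiff ℝ (⊤ : ℕ∞) u)
    (hint : Integrable (fun y => Q y * Real.exp (n * u y)))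
    (hnorm : IsNormal n u Q)
    (C : ℝ) (hC : 0 < C)
    (hR : ∃ R : ℝ, ∀ x : E n, R ≤ ‖x‖ → 0 ≤ Rg n u x ∧ Rg n u x ≤ C)
    (hvol : Integrable (fun x : E n => Real.exp (n * u x))) :
    ∫ x, Q x * Real.exp (n * u x) = Nat.factorial (n - 1) * sphereVol n :=
  stmt_12_general (by lia) (contDiff_infty.1 hu 2) hint hnorm hR hvol
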